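/- arXiv:math/0505041 — 9 statements merged into one kernel-verified Lean document; each statement's English description precedes it below -/
import Mathlib

section
/- (q-Racah parameter array.) Let d be a non-negative integer and let q, s, s*, r be nonzero scalars in K. Define, for 0 ≤ i ≤ d, θ_i = s·q^{d−2i} + q^{2i−d}/s and θ*_i = s*·q^{d−2i} + q^{2i−d}/s*, and, for 1 ≤ i ≤ d, φ_i = (q^{2d+2−4i}/(s·s*·r))·(1 − q^{2i})(1 − q^{2i−2d−2})(s·s* − r·q^{2i−d−1})(s·s*·r − q^{2i−d−1}) and ϕ_i = (q^{2d+2−4i}/(s·s*·r))·(1 − q^{2i})(1 − q^{2i−2d−2})(s*·r − s·q^{2i−d−1})(s* − s·r·q^{2i−d−1}). Assume θ_i ≠ θ_j and θ*_i ≠ θ*_j for 0 ≤ i < j ≤ d, and φ_i ≠ 0 and ϕ_i ≠ 0 for 1 ≤ i ≤ d. Then (θ_0,…,θ_d; θ*_0,…,θ*_d; φ_1,…,φ_d; ϕ_1,…,ϕ_d) is a parameter array over K of diameter d, i.e., conditions PA3, PA4 and PA5 also hold. -/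
/-!
Write `c(x) = x + x⁻¹` (`addInv`) and `t(x) = x - x⁻¹` (`subInv`), so that
`t(x) t(y) = c(x y) - c(x / y)`. Then `θ_i = c(s q^(d-2i))`, `θ*_i = c(s* q^(d-2i))`,
`φ_i = t(q^i) t(q^(d+1-i)) (c(r) - c(s s* q^(d+1-2i)))`, and `ϕ_i` is `φ_i` with `s⁻¹` in place of
`s`. By the product formula the sum in PA3 telescopes to
`t(q^i) t(q^(d+1-i)) / (t(q) t(q^d))`, while `(θ*_i - θ*_0)(θ_{i-1} - θ_d)` equals
`-t(q^i) t(q^(d+1-i)) (c(s s* q^(d+1-2i)) - c(s⁻¹ s* q^(d-1)))`; together these give PA3.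
Replacing `s` by `s⁻¹` reverses the order of the `θ_i` and exchanges `φ` with `ϕ`, which turns PA3
into PA4. Both ratios in PA5 equal `t(q^3) / t(q)`.
-/

namespace QRacah

variable {K : Type*} [Field K]

/-- The Laurent polynomial `x + x⁻¹`, formally `2 cosh (log x)`. -/
def addInv (x : K) : K := x + x⁻¹

/-- The Laurent polynomial `x - x⁻¹`; at `x = q ^ n` it is the `q`-integer `[n]` multiplied by
`q - q⁻¹`. -/
def subInv (x : K) : K := x - x⁻¹

/-- The `q`-Racah eigenvalue `θ_i` of diameter `d`; the dual eigenvalue `θ*_i` is obtained by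
taking `s*` for `s`. The indices are integers to avoid truncated subtraction. -/
def eigenvalue (q s : K) (d i : ℤ) : K :=
  s * q ^ (d - 2 * i) + q ^ (2 * i - d) / s

/-- The `i`-th term `φ_i` of the first split sequence of `q`-Racah type; `ss` is `s*`. -/
def firstSplit (q s ss r : K) (d i : ℤ) : K :=
  q ^ (2 * d + 2 - 4 * i) / (s * ss * r) * (1 - q ^ (2 * i)) * (1 - q ^ (2 * i - 2 * d - 2)) *
    (s * ss - r * q ^ (2 * i - d - 1)) * (s * ss * r - q ^ (2 * i - d - 1))

/-- The `i`-th term `ϕ_i` of the second split sequence of `q`-Racah type; `ss` is `s*`. -/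
def secondSplit (q s ss r : K) (d i : ℤ) : K :=
  q ^ (2 * d + 2 - 4 * i) / (s * ss * r) * (1 - q ^ (2 * i)) * (1 - q ^ (2 * i - 2 * d - 2)) *
    (ss * r - s * q ^ (2 * i - d - 1)) * (ss - s * r * q ^ (2 * i - d - 1))

theorem subInv_mul_subInv (x y : K) : subInv x * subInv y = addInv (x * y) - addInv (x / y) := by
  simp only [subInv, addInv, mul_inv, div_eq_mul_inv, inv_inv]
  ring

theorem subInv_zpow_eq_zero {q : K} (h : subInv q = 0) (n : ℤ) : subInv (q ^ n) = 0 := by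
  rw [subInv, ← inv_zpow, ← sub_eq_zero.mp h, sub_self]

theorem eigenvalue_eq_addInv (q s : K) (d i : ℤ) :
    eigenvalue q s d i = addInv (s * q ^ (d - 2 * i)) := by
  rw [eigenvalue, addInv, mul_inv, ← zpow_neg, neg_sub, div_eq_inv_mul]

theorem eigenvalue_inv (q s : K) (d i : ℤ) :
    eigenvalue q s⁻¹ d i = eigenvalue q s d (d - i) := by
  rw [eigenvalue, eigenvalue, show d - 2 * (d - i) = 2 * i - d by ring,
    show 2 * (d - i) - d = d - 2 * i by ring, div_inv_eq_mul, div_eq_mul_inv]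
  ring

theorem firstSplit_inv {s : K} (hs : s ≠ 0) (q ss r : K) (d i : ℤ) :
    firstSplit q s⁻¹ ss r d i = secondSplit q s ss r d i := by
  rw [firstSplit, secondSplit]
  field_simp

theorem secondSplit_inv {s : K} (hs : s ≠ 0) (q ss r : K) (d i : ℤ) :
    secondSplit q s⁻¹ ss r d i = firstSplit q s ss r d i := by
  rw [← firstSplit_inv (inv_ne_zero hs), inv_inv]

section

variable {q : K} (hq : q ≠ 0)
include hq

theorem eigenvalue_sub_eigenvalue (s : K) (d i j : ℤ) :
    eigenvalue q s d i - eigenvalue q s d j =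
      subInv (s * q ^ (d - i - j)) * subInv (q ^ (j - i)) := by
  rw [eigenvalue_eq_addInv, eigenvalue_eq_addInv, subInv_mul_subInv, mul_assoc, mul_div_assoc,
    ← zpow_add₀ hq, ← zpow_sub₀ hq]
  ring_nf

theorem subInv_mul_sum_subInv (d : ℤ) (n : ℕ) :
    subInv q * ∑ j ∈ Finset.range n, subInv (q ^ (d - 2 * j)) =
      subInv (q ^ (n : ℤ)) * subInv (q ^ (d + 1 - n)) := by
  have term_eq_sub (j : ℕ) : subInv q * subInv (q ^ (d - 2 * j)) =
      addInv (q ^ (d + 1 - 2 * (j : ℤ))) - addInv (q ^ (d + 1 - 2 * ((j + 1 : ℕ) : ℤ))) := by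
    rw [mul_comm, subInv_mul_subInv, ← zpow_add_one₀ hq, div_eq_mul_inv, ← zpow_sub_one₀ hq]
    push_cast
    ring_nf
  simp only [Finset.mul_sum, term_eq_sub]
  rw [Finset.sum_range_sub' fun j : ℕ => addInv (q ^ (d + 1 - 2 * (j : ℤ))), mul_comm (subInv _),
    subInv_mul_subInv, ← zpow_add₀ hq, ← zpow_sub₀ hq]
  push_cast
  ring_nf

theorem subInv_zpow_ne_zero_of_eigenvalue_ne {s : K} {d i j : ℤ}
    (h : eigenvalue q s d i ≠ eigenvalue q s d j) : subInv (q ^ (j - i)) ≠ 0 :=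
  right_ne_zero_of_mul (eigenvalue_sub_eigenvalue hq s d i j ▸ sub_ne_zero.mpr h)

theorem subInv_ne_zero_of_eigenvalue_ne {s : K} {d i j : ℤ}
    (h : eigenvalue q s d i ≠ eigenvalue q s d j) : subInv q ≠ 0 :=
  fun hq_zero => subInv_zpow_ne_zero_of_eigenvalue_ne hq h (subInv_zpow_eq_zero hq_zero _)

theorem eigenvalue_sub_mul_eigenvalue_sub {s : K} (ss : K) (d i : ℤ) :
    (eigenvalue q ss d i - eigenvalue q ss d 0) *
        (eigenvalue q s d (i - 1) - eigenvalue q s d d) =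
      -(subInv (q ^ i) * subInv (q ^ (d + 1 - i)) *
        (addInv (s * ss * q ^ (d + 1 - 2 * i)) - addInv (s⁻¹ * ss * q ^ (d - 1)))) := by
  have left : eigenvalue q ss d 0 - eigenvalue q ss d i =
      subInv (ss * q ^ (d - i)) * subInv (q ^ i) := by
    simpa using eigenvalue_sub_eigenvalue hq ss d 0 i
  have right : eigenvalue q s d (i - 1) - eigenvalue q s d d =
      subInv (s * q ^ (1 - i)) * subInv (q ^ (d + 1 - i)) := by
    rw [eigenvalue_sub_eigenvalue hq]
    ring_nf
  have middle : subInv (ss * q ^ (d - i)) * subInv (s * q ^ (1 - i)) =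
      addInv (s * ss * q ^ (d + 1 - 2 * i)) - addInv (s⁻¹ * ss * q ^ (d - 1)) := by
    rw [subInv_mul_subInv, mul_mul_mul_comm, mul_div_mul_comm, ← zpow_add₀ hq, ← zpow_sub₀ hq]
    ring_nf
  rw [← neg_sub, left, right, ← middle]
  ring

theorem sum_eigenvalue_sub_div {s : K} {d : ℤ}
    (h : eigenvalue q s d 0 ≠ eigenvalue q s d d) (n : ℕ) :
    ∑ j ∈ Finset.range n, (eigenvalue q s d j - eigenvalue q s d (d - j)) /
        (eigenvalue q s d 0 - eigenvalue q s d d) =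
      subInv (q ^ (n : ℤ)) * subInv (q ^ (d + 1 - n)) / (subInv q * subInv (q ^ d)) := by
  have sub_reverse (j : ℤ) : eigenvalue q s d j - eigenvalue q s d (d - j) =
      subInv s * subInv (q ^ (d - 2 * j)) := by
    rw [eigenvalue_sub_eigenvalue hq, show d - j - (d - j) = 0 by ring, zpow_zero, mul_one,
      show d - j - j = d - 2 * j by ring]
  have sub_ends : eigenvalue q s d 0 - eigenvalue q s d d = subInv s * subInv (q ^ d) := by
    simpa using sub_reverse 0
  have hs : subInv s ≠ 0 := left_ne_zero_of_mul (sub_ends ▸ sub_ne_zero.mpr h)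
  rw [← Finset.sum_div, sub_ends]
  simp only [sub_reverse]
  rw [← Finset.mul_sum, mul_div_mul_left _ _ hs, ← subInv_mul_sum_subInv hq,
    mul_div_mul_left _ _ (subInv_ne_zero_of_eigenvalue_ne hq h)]

theorem eigenvalue_three_term_ratio {s : K} {d i : ℤ}
    (h : eigenvalue q s d (i - 1) ≠ eigenvalue q s d i) :
    (eigenvalue q s d (i - 2) - eigenvalue q s d (i + 1)) /
        (eigenvalue q s d (i - 1) - eigenvalue q s d i) = subInv (q ^ 3) / subInv q := by
  have outer : eigenvalue q s d (i - 2) - eigenvalue q s d (i + 1) =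
      subInv (s * q ^ (d - 2 * i + 1)) * subInv (q ^ 3) := by
    rw [eigenvalue_sub_eigenvalue hq, ← zpow_natCast q 3]
    ring_nf
  have inner : eigenvalue q s d (i - 1) - eigenvalue q s d i =
      subInv (s * q ^ (d - 2 * i + 1)) * subInv q := by
    rw [eigenvalue_sub_eigenvalue hq, sub_sub_cancel, zpow_one]
    ring_nf
  rw [outer, inner, mul_div_mul_left]
  exact left_ne_zero_of_mul (inner ▸ sub_ne_zero.mpr h)

theorem three_term_ratio_of_eq_eigenvalue {s : K} {d : ℕ} {η : ℕ → K}
    (hη : ∀ i : ℕ, i ≤ d → η i = eigenvalue q s d i) {i : ℕ} (h2 : 2 ≤ i) (hi : i < d)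
    (h : η (i - 1) ≠ η i) :
    (η (i - 2) - η (i + 1)) / (η (i - 1) - η i) = subInv (q ^ 3) / subInv q := by
  rw [hη (i - 1) (by lia), hη i hi.le, Nat.cast_sub (by lia : 1 ≤ i)] at h
  rw [hη (i - 2) (by lia), hη (i + 1) hi, hη (i - 1) (by lia), hη i hi.le, Nat.cast_sub h2,
    Nat.cast_sub (by lia : 1 ≤ i)]
  exact eigenvalue_three_term_ratio hq h

variable {s ss r : K} (hs : s ≠ 0) (hss : ss ≠ 0) (hr : r ≠ 0)
include hs hss hr

theorem firstSplit_eq_subInv_mul (d i : ℤ) :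
    firstSplit q s ss r d i = subInv (q ^ i) * subInv (q ^ (d + 1 - i)) *
      (addInv r - addInv (s * ss * q ^ (d + 1 - 2 * i))) := by
  obtain ⟨e, rfl⟩ : ∃ e, d = e + i - 1 := ⟨d + 1 - i, by ring⟩
  rw [firstSplit, show 2 * (e + i - 1) + 2 - 4 * i = 2 * (e - i) by ring,
    show 2 * i - 2 * (e + i - 1) - 2 = -(2 * e) by ring,
    show 2 * i - (e + i - 1) - 1 = i - e by ring, show e + i - 1 + 1 - i = e by ring,
    show e + i - 1 + 1 - 2 * i = e - i by ring]
  simp only [zpow_neg, mul_comm (2 : ℤ), zpow_mul, zpow_sub₀ hq, zpow_ofNat, subInv, addInv]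
  have hqi : q ^ i ≠ 0 := zpow_ne_zero i hq
  have hqe : q ^ e ≠ 0 := zpow_ne_zero e hq
  field_simp
  ring

theorem secondSplit_eq_subInv_mul (d i : ℤ) :
    secondSplit q s ss r d i = subInv (q ^ i) * subInv (q ^ (d + 1 - i)) *
      (addInv r - addInv (s⁻¹ * ss * q ^ (d + 1 - 2 * i))) := by
  rw [← firstSplit_inv hs, firstSplit_eq_subInv_mul hq (inv_ne_zero hs) hss hr]

theorem firstSplit_eq_secondSplit_one_mul_add {d : ℤ}
    (h : eigenvalue q s d 0 ≠ eigenvalue q s d d) (n : ℕ) :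
    firstSplit q s ss r d n =
      secondSplit q s ss r d 1 *
        (∑ j ∈ Finset.range n, (eigenvalue q s d j - eigenvalue q s d (d - j)) /
          (eigenvalue q s d 0 - eigenvalue q s d d)) +
      (eigenvalue q ss d n - eigenvalue q ss d 0) *
        (eigenvalue q s d (n - 1) - eigenvalue q s d d) := by
  have hq1 : subInv q ≠ 0 := subInv_ne_zero_of_eigenvalue_ne hq h
  have hqd : subInv (q ^ d) ≠ 0 := by simpa using subInv_zpow_ne_zero_of_eigenvalue_ne hq h
  have second_one : secondSplit q s ss r d 1 =
      subInv q * subInv (q ^ d) * (addInv r - addInv (s⁻¹ * ss * q ^ (d - 1))) := by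
    rw [secondSplit_eq_subInv_mul hq hs hss hr, zpow_one, add_sub_cancel_right,
      show d + 1 - 2 * 1 = d - 1 by ring]
  rw [sum_eigenvalue_sub_div hq h, eigenvalue_sub_mul_eigenvalue_sub hq,
    firstSplit_eq_subInv_mul hq hs hss hr, second_one]
  field_simp
  ring

theorem secondSplit_eq_firstSplit_one_mul_add {d : ℤ}
    (h : eigenvalue q s d 0 ≠ eigenvalue q s d d) (n : ℕ) :
    secondSplit q s ss r d n =
      firstSplit q s ss r d 1 *
        (∑ j ∈ Finset.range n, (eigenvalue q s d j - eigenvalue q s d (d - j)) /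
          (eigenvalue q s d 0 - eigenvalue q s d d)) +
      (eigenvalue q ss d n - eigenvalue q ss d 0) *
        (eigenvalue q s d (d - n + 1) - eigenvalue q s d 0) := by
  have h_inv : eigenvalue q s⁻¹ d 0 ≠ eigenvalue q s⁻¹ d d := by
    simpa only [eigenvalue_inv, sub_zero, sub_self] using h.symm
  have PA3_inv := firstSplit_eq_secondSplit_one_mul_add hq (inv_ne_zero hs) hss hr h_inv n
  simp only [firstSplit_inv hs, secondSplit_inv hs, eigenvalue_inv, sub_sub_cancel, sub_zero,
    sub_self] at PA3_inv
  rw [PA3_inv, sub_sub_eq_add_sub, add_sub_right_comm]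
  simp only [← neg_sub (eigenvalue q s d (d - _)), ← neg_sub (eigenvalue q s d d), neg_div_neg_eq]

end

end QRacah

open QRacah in
theorem qRacah_parameter_array_general {K : Type*} [Field K] {d : ℕ} {q s ss r : K}
    (hq : q ≠ 0) (hs : s ≠ 0) (hss : ss ≠ 0) (hr : r ≠ 0) {θ θs φ ϕ : ℕ → K}
    (hθ : ∀ i : ℕ, i ≤ d → θ i = eigenvalue q s d i)
    (hθs : ∀ i : ℕ, i ≤ d → θs i = eigenvalue q ss d i)
    (hφ : ∀ i : ℕ, 1 ≤ i → i ≤ d → φ i = firstSplit q s ss r d i)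
    (hϕ : ∀ i : ℕ, 1 ≤ i → i ≤ d → ϕ i = secondSplit q s ss r d i)
    (hPA1 : ∀ i j : ℕ, i < j → j ≤ d → θ i ≠ θ j ∧ θs i ≠ θs j) :
    (∀ i : ℕ, 1 ≤ i → i ≤ d →
      φ i = ϕ 1 * (∑ j ∈ Finset.range i, (θ j - θ (d - j)) / (θ 0 - θ d)) +
        (θs i - θs 0) * (θ (i - 1) - θ d)) ∧
    (∀ i : ℕ, 1 ≤ i → i ≤ d →
      ϕ i = φ 1 * (∑ j ∈ Finset.range i, (θ j - θ (d - j)) / (θ 0 - θ d)) +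
        (θs i - θs 0) * (θ (d - i + 1) - θ 0)) ∧
    (∃ β : K, ∀ i : ℕ, 2 ≤ i → i ≤ d - 1 →
      (θ (i - 2) - θ (i + 1)) / (θ (i - 1) - θ i) = β ∧
      (θs (i - 2) - θs (i + 1)) / (θs (i - 1) - θs i) = β) := by
  have sum_eq {i : ℕ} (hi : i ≤ d) :
      ∑ j ∈ Finset.range i, (θ j - θ (d - j)) / (θ 0 - θ d) =
        ∑ j ∈ Finset.range i, (eigenvalue q s d j - eigenvalue q s d (d - j)) /
          (eigenvalue q s d 0 - eigenvalue q s d d) := by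
    refine Finset.sum_congr rfl fun j hj => ?_
    have hjd : j ≤ d := (Finset.mem_range.mp hj).le.trans hi
    rw [hθ j hjd, hθ (d - j) (d.sub_le j), hθ 0 d.zero_le, hθ d le_rfl, Nat.cast_sub hjd,
      Nat.cast_zero]
  have ends_ne (hd : 0 < d) : eigenvalue q s d 0 ≠ eigenvalue q s d d := by
    simpa only [hθ 0 d.zero_le, hθ d le_rfl, Nat.cast_zero] using (hPA1 0 d hd le_rfl).1
  refine ⟨fun i h1 hi => ?_, fun i h1 hi => ?_, subInv (q ^ 3) / subInv q, fun i h2 hi => ?_⟩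
  · rw [sum_eq hi, hφ i h1 hi, hϕ 1 le_rfl (h1.trans hi), hθs i hi, hθs 0 d.zero_le,
      hθ (i - 1) (by lia), hθ d le_rfl, Nat.cast_sub h1]
    exact firstSplit_eq_secondSplit_one_mul_add hq hs hss hr (ends_ne (by lia)) i
  · rw [sum_eq hi, hϕ i h1 hi, hφ 1 le_rfl (h1.trans hi), hθs i hi, hθs 0 d.zero_le,
      hθ (d - i + 1) (by lia), hθ 0 d.zero_le, Nat.cast_add, Nat.cast_sub hi]
    exact secondSplit_eq_firstSplit_one_mul_add hq hs hss hr (ends_ne (by lia)) i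
  · have hne := hPA1 (i - 1) i (by lia) (by lia)
    exact ⟨three_term_ratio_of_eq_eigenvalue hq hθ h2 (by lia) hne.1,
      three_term_ratio_of_eq_eigenvalue hq hθs h2 (by lia) hne.2⟩

/-- The q-Racah data forms a parameter array: PA3, PA4 and PA5 hold. -/
theorem qRacah_parameter_array
    {K : Type*} [Field K] [IsAlgClosed K] (hchar : ringChar K ≠ 2)
    (d : ℕ) (q s ss r : K) (hq : q ≠ 0) (hs : s ≠ 0) (hss : ss ≠ 0) (hr : r ≠ 0)
    (θ θs φ ϕ : ℕ → K)
    (hθ : ∀ i : ℕ, i ≤ d → θ i = s * q ^ ((d : ℤ) - 2 * i) + q ^ (2 * (i : ℤ) - d) / s)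
    (hθs : ∀ i : ℕ, i ≤ d → θs i = ss * q ^ ((d : ℤ) - 2 * i) + q ^ (2 * (i : ℤ) - d) / ss)
    (hφ : ∀ i : ℕ, 1 ≤ i → i ≤ d →
      φ i = q ^ (2 * (d : ℤ) + 2 - 4 * i) / (s * ss * r) *
        (1 - q ^ (2 * (i : ℤ))) * (1 - q ^ (2 * (i : ℤ) - 2 * d - 2)) *
        (s * ss - r * q ^ (2 * (i : ℤ) - d - 1)) * (s * ss * r - q ^ (2 * (i : ℤ) - d - 1)))
    (hϕ : ∀ i : ℕ, 1 ≤ i → i ≤ d →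
      ϕ i = q ^ (2 * (d : ℤ) + 2 - 4 * i) / (s * ss * r) *
        (1 - q ^ (2 * (i : ℤ))) * (1 - q ^ (2 * (i : ℤ) - 2 * d - 2)) *
        (ss * r - s * q ^ (2 * (i : ℤ) - d - 1)) * (ss - s * r * q ^ (2 * (i : ℤ) - d - 1)))
    (hPA1 : ∀ i j : ℕ, i < j → j ≤ d → θ i ≠ θ j ∧ θs i ≠ θs j)
    (hPA2 : ∀ i : ℕ, 1 ≤ i → i ≤ d → φ i ≠ 0 ∧ ϕ i ≠ 0) :
    (∀ i : ℕ, 1 ≤ i → i ≤ d →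
      φ i = ϕ 1 * (∑ j ∈ Finset.range i, (θ j - θ (d - j)) / (θ 0 - θ d)) +
        (θs i - θs 0) * (θ (i - 1) - θ d)) ∧
    (∀ i : ℕ, 1 ≤ i → i ≤ d →
      ϕ i = φ 1 * (∑ j ∈ Finset.range i, (θ j - θ (d - j)) / (θ 0 - θ d)) +
        (θs i - θs 0) * (θ (d - i + 1) - θ 0)) ∧
    (∃ β : K, ∀ i : ℕ, 2 ≤ i → i ≤ d - 1 →
      (θ (i - 2) - θ (i + 1)) / (θ (i - 1) - θ i) = β ∧
      (θs (i - 2) - θs (i + 1)) / (θs (i - 1) - θs i) = β) := by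
  exact qRacah_parameter_array_general hq hs hss hr hθ hθs hφ hϕ hPA1
end

section
/- (q-Hahn parameter array.) Let d be a non-negative integer and let q, s*, r be nonzero scalars in K. Define, for 0 ≤ i ≤ d, θ_i = q^{−i} and θ*_i = q^{−i} + s*·q^{i+1}, and, for 1 ≤ i ≤ d, φ_i = q^{1−2i}·(1 − q^i)(1 − q^{i−d−1})(1 − r·q^i) and ϕ_i = −q^{1−i}·(1 − q^i)(1 − q^{i−d−1})(r − s*·q^i). Assume θ_i ≠ θ_j and θ*_i ≠ θ*_j for 0 ≤ i < j ≤ d, and φ_i ≠ 0 and ϕ_i ≠ 0 for 1 ≤ i ≤ d. Then (θ_0,…,θ_d; θ*_0,…,θ*_d; φ_1,…,φ_d; ϕ_1,…,ϕ_d) is a parameter array over K of diameter d, i.e., conditions PA3, PA4 and PA5 also hold. -/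
/-!
Both eigenvalue sequences are of the form `x i = a + b q ^ i + c q ^ (-i)`. For such a sequence,
`x j - x (d - j) = (c - b q ^ d) (q ^ (-j) - q ^ (j - d))`, so `a`, `b`, `c` cancel from the ratios
`(x j - x (d - j)) / (x 0 - x d)`, whose partial sums become geometric. Multiplied by
`(1 - q) (1 - q ^ (-d))`, the `i`-th partial sum is
`q ^ (1 - i) (1 - q ^ i) (1 - q ^ (i - d - 1))`, a common factor of `φ i` and `ϕ i`; PA3 and PA4
become Laurent polynomial identities in `q`, `q ^ i` and `q ^ d`. The same form of `x` gives PA5,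
with common value `q + 1 + q⁻¹`.
-/

section

variable {K : Type*} [Field K] {q : K}

theorem one_sub_mul_sum_zpow_neg_sub_zpow (hq : q ≠ 0) (d : ℤ) (i : ℕ) :
    (1 - q) * ∑ j ∈ Finset.range i, (q ^ (-(j : ℤ)) - q ^ ((j : ℤ) - d)) =
      q ^ (1 - (i : ℤ)) * (1 - q ^ (i : ℤ)) * (1 - q ^ ((i : ℤ) - d - 1)) := by
  induction i with
  | zero => simp
  | succ n ih =>
    rw [Finset.sum_range_succ, mul_add, ih]
    push_cast
    simp only [zpow_add₀ hq, zpow_sub₀ hq, zpow_neg, zpow_one]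
    field_simp
    ring

/-- The terms `x 0, …, x d` lie on a `q`-quadratic lattice `i ↦ a + b q ^ i + c q ^ (-i)`, the shape
shared by the eigenvalue and dual eigenvalue sequences of `q`-Racah type. Nothing is said about
`x i` for `i > d`. -/
def IsQQuadratic (q : K) (d : ℕ) (x : ℕ → K) : Prop :=
  ∃ a b c : K, ∀ i ≤ d, x i = a + b * q ^ (i : ℤ) + c * q ^ (-(i : ℤ))

namespace IsQQuadratic

variable {d : ℕ} {x : ℕ → K}

theorem exists_sub_reflect_eq (hx : IsQQuadratic q d x) (hq : q ≠ 0) :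
    ∃ e : K, ∀ j ≤ d, x j - x (d - j) = e * (q ^ (-(j : ℤ)) - q ^ ((j : ℤ) - d)) := by
  obtain ⟨a, b, c, hx⟩ := hx
  refine ⟨c - b * q ^ (d : ℤ), fun j hj => ?_⟩
  rw [hx j hj, hx (d - j) (Nat.sub_le d j), Nat.cast_sub hj]
  simp only [zpow_sub₀ hq, zpow_neg]
  field_simp
  ring

theorem mul_sum_sub_reflect_div (hx : IsQQuadratic q d x) (hq : q ≠ 0) (h0d : x 0 ≠ x d)
    {i : ℕ} (hi : i ≤ d + 1) :
    (1 - q) * (1 - q ^ (-(d : ℤ))) *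
        ∑ j ∈ Finset.range i, (x j - x (d - j)) / (x 0 - x d) =
      q ^ (1 - (i : ℤ)) * (1 - q ^ (i : ℤ)) * (1 - q ^ ((i : ℤ) - d - 1)) := by
  obtain ⟨e, he⟩ := hx.exists_sub_reflect_eq hq
  have h_ends : x 0 - x d = e * (1 - q ^ (-(d : ℤ))) := by simpa using he 0 d.zero_le
  obtain ⟨he0, hqd⟩ : e ≠ 0 ∧ 1 - q ^ (-(d : ℤ)) ≠ 0 :=
    mul_ne_zero_iff.1 (h_ends ▸ sub_ne_zero.2 h0d)
  have h_sum : ∑ j ∈ Finset.range i, (x j - x (d - j)) =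
      e * ∑ j ∈ Finset.range i, (q ^ (-(j : ℤ)) - q ^ ((j : ℤ) - d)) := by
    rw [Finset.mul_sum]
    exact Finset.sum_congr rfl fun j hj => he j (by grind)
  rw [← Finset.sum_div, h_sum, h_ends, mul_div_mul_left _ _ he0, mul_assoc,
    mul_div_cancel₀ _ hqd, one_sub_mul_sum_zpow_neg_sub_zpow hq]

theorem sub_div_sub_eq (hx : IsQQuadratic q d x) (hq : q ≠ 0) {i : ℕ} (hi : 2 ≤ i)
    (hid : i + 1 ≤ d) (hne : x (i - 1) ≠ x i) :
    (x (i - 2) - x (i + 1)) / (x (i - 1) - x i) = q + 1 + q⁻¹ := by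
  obtain ⟨a, b, c, hx⟩ := hx
  rw [div_eq_iff (sub_ne_zero.2 hne), hx _ hid, hx i (by omega), hx (i - 1) (by omega),
    hx (i - 2) (by omega)]
  push_cast [hi, one_le_two.trans hi]
  simp only [zpow_add₀ hq, zpow_sub₀ hq, zpow_neg, zpow_ofNat]
  field_simp
  ring

end IsQQuadratic

/-- The scalars `θ`, `θs` (for `θ*`), `φ`, `ϕ` are given by the `q`-Hahn formulas of diameter `d`
with parameters `q`, `ss` (for `s*`) and `r`. Only the indices that occur in a parameter array are
constrained. -/
structure IsQHahn (q ss r : K) (d : ℕ) (θ θs φ ϕ : ℕ → K) : Prop where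
  eigenvalue : ∀ i : ℕ, i ≤ d → θ i = q ^ (-(i : ℤ))
  dualEigenvalue : ∀ i : ℕ, i ≤ d → θs i = q ^ (-(i : ℤ)) + ss * q ^ ((i : ℤ) + 1)
  firstSplit : ∀ i : ℕ, 1 ≤ i → i ≤ d →
    φ i = q ^ (1 - 2 * (i : ℤ)) *
      (1 - q ^ (i : ℤ)) * (1 - q ^ ((i : ℤ) - d - 1)) * (1 - r * q ^ (i : ℤ))
  secondSplit : ∀ i : ℕ, 1 ≤ i → i ≤ d →
    ϕ i = -q ^ (1 - (i : ℤ)) *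
      (1 - q ^ (i : ℤ)) * (1 - q ^ ((i : ℤ) - d - 1)) * (r - ss * q ^ (i : ℤ))

namespace IsQHahn

variable {ss r : K} {d i : ℕ} {θ θs φ ϕ : ℕ → K}

theorem isQQuadratic_eigenvalue (h : IsQHahn q ss r d θ θs φ ϕ) : IsQQuadratic q d θ :=
  ⟨0, 0, 1, fun i hi => by rw [h.eigenvalue i hi]; ring⟩

theorem isQQuadratic_dualEigenvalue (h : IsQHahn q ss r d θ θs φ ϕ) (hq : q ≠ 0) :
    IsQQuadratic q d θs :=
  ⟨0, ss * q, 1, fun i hi => by rw [h.dualEigenvalue i hi, zpow_add_one₀ hq]; ring⟩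

theorem dualEigenvalue_sub_dualEigenvalue_zero (h : IsQHahn q ss r d θ θs φ ϕ) (hq : q ≠ 0)
    (hi : i ≤ d) :
    θs i - θs 0 = (1 - q ^ (i : ℤ)) * (q ^ (-(i : ℤ)) - ss * q) := by
  rw [h.dualEigenvalue i hi, h.dualEigenvalue 0 d.zero_le, zpow_add_one₀ hq, zpow_neg]
  simp only [Nat.cast_zero, neg_zero, zpow_zero, zero_add, zpow_one]
  field_simp
  ring

theorem firstSplit_eq (h : IsQHahn q ss r d θ θs φ ϕ) (hq : q ≠ 0) (hθ : θ 0 ≠ θ d)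
    (h1 : 1 ≤ i) (hi : i ≤ d) :
    φ i = ϕ 1 * (∑ j ∈ Finset.range i, (θ j - θ (d - j)) / (θ 0 - θ d)) +
      (θs i - θs 0) * (θ (i - 1) - θ d) := by
  have h_sum := h.isQQuadratic_eigenvalue.mul_sum_sub_reflect_div hq hθ (Nat.le_succ_of_le hi)
  set S := ∑ j ∈ Finset.range i, (θ j - θ (d - j)) / (θ 0 - θ d)
  have hϕ_one : ϕ 1 = (ss * q - r) * ((1 - q) * (1 - q ^ (-(d : ℤ)))) := by
    rw [h.secondSplit 1 le_rfl (h1.trans hi)]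
    simp only [Nat.cast_one, sub_self, zpow_zero, zpow_one, sub_sub_cancel_left]
    ring
  have hθ_sub : θ (i - 1) - θ d = q ^ (1 - (i : ℤ)) * (1 - q ^ ((i : ℤ) - d - 1)) := by
    rw [h.eigenvalue (i - 1) (by omega), h.eigenvalue d le_rfl, Nat.cast_pred h1, mul_one_sub,
      ← zpow_add₀ hq]
    ring_nf
  rw [h.firstSplit i h1 hi, hϕ_one, mul_assoc _ _ S, h_sum,
    h.dualEigenvalue_sub_dualEigenvalue_zero hq hi, hθ_sub,
    show 1 - 2 * (i : ℤ) = 1 - i + -i by ring, zpow_add₀ hq _ (-(i : ℤ)), zpow_neg]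
  field_simp
  ring

theorem secondSplit_eq (h : IsQHahn q ss r d θ θs φ ϕ) (hq : q ≠ 0) (hθ : θ 0 ≠ θ d)
    (h1 : 1 ≤ i) (hi : i ≤ d) :
    ϕ i = φ 1 * (∑ j ∈ Finset.range i, (θ j - θ (d - j)) / (θ 0 - θ d)) +
      (θs i - θs 0) * (θ (d - i + 1) - θ 0) := by
  have h_sum := h.isQQuadratic_eigenvalue.mul_sum_sub_reflect_div hq hθ (Nat.le_succ_of_le hi)
  set S := ∑ j ∈ Finset.range i, (θ j - θ (d - j)) / (θ 0 - θ d)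
  have hφ_one : φ 1 = (q⁻¹ - r) * ((1 - q) * (1 - q ^ (-(d : ℤ)))) := by
    rw [h.firstSplit 1 le_rfl (h1.trans hi)]
    rw [Nat.cast_one, zpow_one, sub_sub_cancel_left, show (1 - 2 * 1 : ℤ) = -1 by norm_num,
      zpow_neg_one]
    field_simp
  have hθ_sub : θ (d - i + 1) - θ 0 = -(1 - q ^ ((i : ℤ) - d - 1)) := by
    rw [h.eigenvalue (d - i + 1) (by omega), h.eigenvalue 0 d.zero_le]
    push_cast [hi]
    rw [neg_zero, zpow_zero, neg_sub]
    ring_nf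
  rw [h.secondSplit i h1 hi, hφ_one, mul_assoc _ _ S, h_sum,
    h.dualEigenvalue_sub_dualEigenvalue_zero hq hi, hθ_sub, zpow_sub₀ hq 1, zpow_one, zpow_neg]
  field_simp
  ring

end IsQHahn

theorem qHahn_parameter_array_general {ss r : K} {d : ℕ} {θ θs φ ϕ : ℕ → K}
    (h : IsQHahn q ss r d θ θs φ ϕ) (hq : q ≠ 0)
    (hPA1 : ∀ i j : ℕ, i < j → j ≤ d → θ i ≠ θ j ∧ θs i ≠ θs j) :
    (∀ i : ℕ, 1 ≤ i → i ≤ d →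
      φ i = ϕ 1 * (∑ j ∈ Finset.range i, (θ j - θ (d - j)) / (θ 0 - θ d)) +
        (θs i - θs 0) * (θ (i - 1) - θ d)) ∧
    (∀ i : ℕ, 1 ≤ i → i ≤ d →
      ϕ i = φ 1 * (∑ j ∈ Finset.range i, (θ j - θ (d - j)) / (θ 0 - θ d)) +
        (θs i - θs 0) * (θ (d - i + 1) - θ 0)) ∧
    (∃ β : K, ∀ i : ℕ, 2 ≤ i → i ≤ d - 1 →
      (θ (i - 2) - θ (i + 1)) / (θ (i - 1) - θ i) = β ∧
      (θs (i - 2) - θs (i + 1)) / (θs (i - 1) - θs i) = β) := by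
  refine ⟨fun i h1 hi => h.firstSplit_eq hq (hPA1 0 d (by omega) le_rfl).1 h1 hi,
    fun i h1 hi => h.secondSplit_eq hq (hPA1 0 d (by omega) le_rfl).1 h1 hi,
    q + 1 + q⁻¹, fun i h2 hi => ?_⟩
  obtain ⟨hθ, hθs⟩ := hPA1 (i - 1) i (by omega) (by omega)
  exact ⟨h.isQQuadratic_eigenvalue.sub_div_sub_eq hq h2 (by omega) hθ,
    (h.isQQuadratic_dualEigenvalue hq).sub_div_sub_eq hq h2 (by omega) hθs⟩

end

/-- The q-Hahn data forms a parameter array: PA3, PA4 and PA5 hold. -/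
theorem qHahn_parameter_array
    {K : Type*} [Field K] [IsAlgClosed K] (hchar : ringChar K ≠ 2)
    (d : ℕ) (q ss r : K) (hq : q ≠ 0) (hss : ss ≠ 0) (hr : r ≠ 0)
    (θ θs φ ϕ : ℕ → K)
    (hθ : ∀ i : ℕ, i ≤ d → θ i = q ^ (-(i : ℤ)))
    (hθs : ∀ i : ℕ, i ≤ d → θs i = q ^ (-(i : ℤ)) + ss * q ^ ((i : ℤ) + 1))
    (hφ : ∀ i : ℕ, 1 ≤ i → i ≤ d →
      φ i = q ^ (1 - 2 * (i : ℤ)) *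
        (1 - q ^ (i : ℤ)) * (1 - q ^ ((i : ℤ) - d - 1)) * (1 - r * q ^ (i : ℤ)))
    (hϕ : ∀ i : ℕ, 1 ≤ i → i ≤ d →
      ϕ i = -q ^ (1 - (i : ℤ)) *
        (1 - q ^ (i : ℤ)) * (1 - q ^ ((i : ℤ) - d - 1)) * (r - ss * q ^ (i : ℤ)))
    (hPA1 : ∀ i j : ℕ, i < j → j ≤ d → θ i ≠ θ j ∧ θs i ≠ θs j)
    (hPA2 : ∀ i : ℕ, 1 ≤ i → i ≤ d → φ i ≠ 0 ∧ ϕ i ≠ 0) :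
    (∀ i : ℕ, 1 ≤ i → i ≤ d →
      φ i = ϕ 1 * (∑ j ∈ Finset.range i, (θ j - θ (d - j)) / (θ 0 - θ d)) +
        (θs i - θs 0) * (θ (i - 1) - θ d)) ∧
    (∀ i : ℕ, 1 ≤ i → i ≤ d →
      ϕ i = φ 1 * (∑ j ∈ Finset.range i, (θ j - θ (d - j)) / (θ 0 - θ d)) +
        (θs i - θs 0) * (θ (d - i + 1) - θ 0)) ∧
    (∃ β : K, ∀ i : ℕ, 2 ≤ i → i ≤ d - 1 →
      (θ (i - 2) - θ (i + 1)) / (θ (i - 1) - θ i) = β ∧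
      (θs (i - 2) - θs (i + 1)) / (θs (i - 1) - θs i) = β) :=
  qHahn_parameter_array_general ⟨hθ, hθs, hφ, hϕ⟩ hq hPA1
end

section
/- (Dual q-Hahn parameter array.) Let d be a non-negative integer and let q, s, r be nonzero scalars in K. Define, for 0 ≤ i ≤ d, θ_i = q^{−i} + s·q^{i+1} and θ*_i = q^{−i}, and, for 1 ≤ i ≤ d, φ_i = q^{1−2i}·(1 − q^i)(1 − q^{i−d−1})(1 − r·q^i) and ϕ_i = q^{d+2−2i}·(1 − q^i)(1 − q^{i−d−1})(s − r·q^{i−d−1}). Assume θ_i ≠ θ_j and θ*_i ≠ θ*_j for 0 ≤ i < j ≤ d, and φ_i ≠ 0 and ϕ_i ≠ 0 for 1 ≤ i ≤ d. Then (θ_0,…,θ_d; θ*_0,…,θ*_d; φ_1,…,φ_d; ϕ_1,…,ϕ_d) is a parameter array over K of diameter d, i.e., conditions PA3, PA4 and PA5 also hold. -/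
/-!
The parameter `s` enters differences of eigenvalues only through a factor:
`θ_i - θ_j = (θ*_i - θ*_j) (1 - s q^(i+j+1))`. In `(θ_j - θ_{d-j}) / (θ_0 - θ_d)` and in the ratios
of PA5 the indices have equal sums in numerator and denominator, so this factor cancels. The sum in
PA3 and PA4 then becomes a difference of two geometric sums, a multiple of
`(1 - q^i) (1 - q^(i-d-1))`. That product divides every term of PA3 and PA4, and what is left after
cancelling it is linear in `s` and `r`.
-/

namespace DualQHahn

variable {K : Type*} [Field K]

/-- The eigenvalue `θ_i` of the dual q-Hahn array. As for the other sequences below, the indices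
are integers, so that `θ_{i-1}` and `θ_{d-i}` involve no truncated subtraction. -/
def eigenvalue (q s : K) (i : ℤ) : K := q ^ (-i) + s * q ^ (i + 1)

/-- The dual eigenvalue `θ*_i` of the dual q-Hahn array. -/
def dualEigenvalue (q : K) (i : ℤ) : K := q ^ (-i)

/-- The term `φ_i` of the first split sequence of the dual q-Hahn array of diameter `d`. -/
def firstSplit (q r : K) (d i : ℤ) : K :=
  q ^ (1 - 2 * i) * (1 - q ^ i) * (1 - q ^ (i - d - 1)) * (1 - r * q ^ i)

/-- The term `ϕ_i` of the second split sequence of the dual q-Hahn array of diameter `d`. -/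
def secondSplit (q s r : K) (d i : ℤ) : K :=
  q ^ (d + 2 - 2 * i) * (1 - q ^ i) * (1 - q ^ (i - d - 1)) * (s - r * q ^ (i - d - 1))

variable {q s : K} {d : ℤ}

theorem eigenvalue_sub_eigenvalue (hq : q ≠ 0) (s : K) (i j : ℤ) :
    eigenvalue q s i - eigenvalue q s j =
      (dualEigenvalue q i - dualEigenvalue q j) * (1 - s * q ^ (i + j + 1)) := by
  simp only [eigenvalue, dualEigenvalue, zpow_add₀ hq, zpow_neg, zpow_one]
  field_simp
  ring

theorem dualEigenvalue_ne_of_eigenvalue_ne (hq : q ≠ 0) {i j : ℤ}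
    (h : eigenvalue q s i ≠ eigenvalue q s j) : dualEigenvalue q i ≠ dualEigenvalue q j := by
  rw [← sub_ne_zero, eigenvalue_sub_eigenvalue hq] at h
  exact sub_ne_zero.1 (left_ne_zero_of_mul h)

theorem eigenvalue_sub_div_eigenvalue_sub (hq : q ≠ 0) {i j k l : ℤ} (hsum : i + j = k + l)
    (h : eigenvalue q s k ≠ eigenvalue q s l) :
    (eigenvalue q s i - eigenvalue q s j) / (eigenvalue q s k - eigenvalue q s l) =
      (dualEigenvalue q i - dualEigenvalue q j) / (dualEigenvalue q k - dualEigenvalue q l) := by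
  rw [← sub_ne_zero, eigenvalue_sub_eigenvalue hq] at h
  rw [eigenvalue_sub_eigenvalue hq, eigenvalue_sub_eigenvalue hq, hsum,
    mul_div_mul_right _ _ (right_ne_zero_of_mul h)]

theorem dualEigenvalue_sub_div_eq (hq : q ≠ 0) {i : ℤ}
    (h : dualEigenvalue q (i - 1) ≠ dualEigenvalue q i) :
    (dualEigenvalue q (i - 2) - dualEigenvalue q (i + 1)) /
      (dualEigenvalue q (i - 1) - dualEigenvalue q i) = q + 1 + q⁻¹ := by
  rw [div_eq_iff (sub_ne_zero.2 h)]
  simp only [dualEigenvalue, neg_add, sub_eq_add_neg, zpow_add₀ hq, zpow_neg, zpow_ofNat]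
  field_simp
  ring

theorem eigenvalue_sub_div_eq (hq : q ≠ 0) {i : ℤ}
    (h : eigenvalue q s (i - 1) ≠ eigenvalue q s i) :
    (eigenvalue q s (i - 2) - eigenvalue q s (i + 1)) /
      (eigenvalue q s (i - 1) - eigenvalue q s i) = q + 1 + q⁻¹ := by
  rw [eigenvalue_sub_div_eigenvalue_sub hq (by ring) h,
    dualEigenvalue_sub_div_eq hq (dualEigenvalue_ne_of_eigenvalue_ne hq h)]

theorem one_sub_mul_sum_dualEigenvalue_sub (hq : q ≠ 0) (d : ℤ) (i : ℕ) :
    (1 - q) * ∑ j ∈ Finset.range i, (dualEigenvalue q j - dualEigenvalue q (d - j)) =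
      q ^ (1 - i : ℤ) * (1 - q ^ (i : ℤ)) * (1 - q ^ (i - d - 1 : ℤ)) := by
  induction i with
  | zero => simp
  | succ n ih =>
    rw [Finset.sum_range_succ, mul_add, ih]
    simp only [dualEigenvalue, Nat.cast_add, Nat.cast_one, neg_sub, zpow_sub₀ hq, zpow_add₀ hq,
      zpow_neg, zpow_natCast, zpow_one]
    field_simp
    ring

theorem one_sub_mul_one_sub_mul_sum_div (hq : q ≠ 0) (h : eigenvalue q s 0 ≠ eigenvalue q s d)
    (i : ℕ) :
    (1 - q) * (1 - q ^ (-d)) * ∑ j ∈ Finset.range i,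
        (eigenvalue q s j - eigenvalue q s (d - j)) / (eigenvalue q s 0 - eigenvalue q s d) =
      q ^ (1 - i : ℤ) * (1 - q ^ (i : ℤ)) * (1 - q ^ (i - d - 1 : ℤ)) := by
  have hd : dualEigenvalue q 0 - dualEigenvalue q d = 1 - q ^ (-d) := by simp [dualEigenvalue]
  have hd₀ : 1 - q ^ (-d) ≠ 0 :=
    hd ▸ sub_ne_zero.2 (dualEigenvalue_ne_of_eigenvalue_ne hq h)
  have hratio (j : ℕ) :
      (eigenvalue q s j - eigenvalue q s (d - j)) / (eigenvalue q s 0 - eigenvalue q s d) =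
        (dualEigenvalue q j - dualEigenvalue q (d - j)) / (1 - q ^ (-d)) := by
    rw [← hd, eigenvalue_sub_div_eigenvalue_sub hq (by ring) h]
  simp_rw [hratio]
  rw [← Finset.sum_div, mul_assoc, mul_div_cancel₀ _ hd₀, one_sub_mul_sum_dualEigenvalue_sub hq]

theorem firstSplit_one (q r : K) (d : ℤ) :
    firstSplit q r d 1 = q⁻¹ * (1 - r * q) * ((1 - q) * (1 - q ^ (-d))) := by
  simp only [firstSplit, zpow_one, show 1 - d - 1 = -d by ring,
    show (1 - 2 * 1 : ℤ) = -1 by norm_num, zpow_neg_one]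
  ring

theorem secondSplit_one (q s r : K) (d : ℤ) :
    secondSplit q s r d 1 = q ^ d * (s - r * q ^ (-d)) * ((1 - q) * (1 - q ^ (-d))) := by
  simp only [secondSplit, mul_one, add_sub_cancel_right, zpow_one, show 1 - d - 1 = -d by ring]
  ring

theorem dualEigenvalue_sub_zero_mul_sub_diam (hq : q ≠ 0) (d i : ℤ) :
    (dualEigenvalue q i - dualEigenvalue q 0) * (dualEigenvalue q (i - 1) - dualEigenvalue q d) =
      q ^ (1 - 2 * i) * (1 - q ^ i) * (1 - q ^ (i - d - 1)) := by
  simp only [dualEigenvalue, two_mul, neg_sub, neg_zero, zpow_sub₀ hq, zpow_add₀ hq, zpow_neg,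
    zpow_one, zpow_zero]
  field_simp

theorem dualEigenvalue_sub_zero_mul_sub_zero (hq : q ≠ 0) (d i : ℤ) :
    (dualEigenvalue q i - dualEigenvalue q 0) *
        (dualEigenvalue q (d - i + 1) - dualEigenvalue q 0) =
      -(q ^ (-i) * (1 - q ^ i) * (1 - q ^ (i - d - 1))) := by
  rw [dualEigenvalue, dualEigenvalue, dualEigenvalue, show -(d - i + 1) = i - d - 1 by ring,
    neg_zero, zpow_zero, zpow_neg]
  field_simp
  ring

theorem firstSplit_eq_secondSplit_one_mul_sum_add (hq : q ≠ 0) (r : K)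
    (h : eigenvalue q s 0 ≠ eigenvalue q s d) (i : ℕ) :
    firstSplit q r d i =
      secondSplit q s r d 1 * (∑ j ∈ Finset.range i,
        (eigenvalue q s j - eigenvalue q s (d - j)) / (eigenvalue q s 0 - eigenvalue q s d)) +
      (dualEigenvalue q i - dualEigenvalue q 0) *
        (eigenvalue q s (i - 1) - eigenvalue q s d) := by
  have hlinear : 1 - r * q ^ (i : ℤ) =
      q ^ (d + i) * (s - r * q ^ (-d)) + (1 - s * q ^ (i - 1 + d + 1)) := by
    rw [show i - 1 + d + 1 = d + i by ring, zpow_add₀ hq, zpow_neg]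
    field_simp
    ring
  have hpow : q ^ (1 - 2 * i : ℤ) * q ^ (d + i) = q ^ d * q ^ (1 - i : ℤ) := by
    rw [← zpow_add₀ hq, ← zpow_add₀ hq]
    congr 1
    ring
  rw [secondSplit_one, mul_assoc, one_sub_mul_one_sub_mul_sum_div hq h,
    eigenvalue_sub_eigenvalue hq, ← mul_assoc (dualEigenvalue q i - _),
    dualEigenvalue_sub_zero_mul_sub_diam hq, firstSplit, hlinear]
  linear_combination
    (1 - q ^ (i : ℤ)) * (1 - q ^ (i - d - 1 : ℤ)) * (s - r * q ^ (-d)) * hpow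

theorem secondSplit_eq_firstSplit_one_mul_sum_add (hq : q ≠ 0) (r : K)
    (h : eigenvalue q s 0 ≠ eigenvalue q s d) (i : ℕ) :
    secondSplit q s r d i =
      firstSplit q r d 1 * (∑ j ∈ Finset.range i,
        (eigenvalue q s j - eigenvalue q s (d - j)) / (eigenvalue q s 0 - eigenvalue q s d)) +
      (dualEigenvalue q i - dualEigenvalue q 0) *
        (eigenvalue q s (d - i + 1) - eigenvalue q s 0) := by
  have hlinear : q ^ (d + 2 - i) * (s - r * q ^ (i - d - 1)) =
      (1 - r * q) - (1 - s * q ^ (d - i + 1 + 0 + 1)) := by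
    have hcancel : q ^ (d + 2 - i) * q ^ (i - d - 1) = q := by
      rw [← zpow_add₀ hq, show d + 2 - i + (i - d - 1) = 1 by ring, zpow_one]
    rw [show d - i + 1 + 0 + 1 = d + 2 - i by ring]
    linear_combination -r * hcancel
  have hpow_second : q ^ (d + 2 - 2 * i) = q ^ (-i : ℤ) * q ^ (d + 2 - i) := by
    rw [← zpow_add₀ hq]
    congr 1
    ring
  have hpow_first : q⁻¹ * q ^ (1 - i : ℤ) = q ^ (-i : ℤ) := by
    rw [← zpow_neg_one, ← zpow_add₀ hq]
    congr 1
    ring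
  rw [firstSplit_one, mul_assoc, one_sub_mul_one_sub_mul_sum_div hq h,
    eigenvalue_sub_eigenvalue hq, ← mul_assoc (dualEigenvalue q i - _),
    dualEigenvalue_sub_zero_mul_sub_zero hq, secondSplit, hpow_second]
  linear_combination (1 - q ^ (i : ℤ)) * (1 - q ^ (i - d - 1 : ℤ)) *
    (q ^ (-i : ℤ) * hlinear - (1 - r * q) * hpow_first)

end DualQHahn

open DualQHahn in
theorem dual_qHahn_parameter_array_general
    {K : Type*} [Field K] (d : ℕ) (q s r : K) (hq : q ≠ 0) (θ θs φ ϕ : ℕ → K)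
    (hθ : ∀ i : ℕ, i ≤ d → θ i = q ^ (-(i : ℤ)) + s * q ^ ((i : ℤ) + 1))
    (hθs : ∀ i : ℕ, i ≤ d → θs i = q ^ (-(i : ℤ)))
    (hφ : ∀ i : ℕ, 1 ≤ i → i ≤ d →
      φ i = q ^ (1 - 2 * (i : ℤ)) *
        (1 - q ^ (i : ℤ)) * (1 - q ^ ((i : ℤ) - d - 1)) * (1 - r * q ^ (i : ℤ)))
    (hϕ : ∀ i : ℕ, 1 ≤ i → i ≤ d →
      ϕ i = q ^ ((d : ℤ) + 2 - 2 * i) *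
        (1 - q ^ (i : ℤ)) * (1 - q ^ ((i : ℤ) - d - 1)) * (s - r * q ^ ((i : ℤ) - d - 1)))
    (hθ_ne : ∀ i j : ℕ, i < j → j ≤ d → θ i ≠ θ j) :
    (∀ i : ℕ, 1 ≤ i → i ≤ d →
      φ i = ϕ 1 * (∑ j ∈ Finset.range i, (θ j - θ (d - j)) / (θ 0 - θ d)) +
        (θs i - θs 0) * (θ (i - 1) - θ d)) ∧
    (∀ i : ℕ, 1 ≤ i → i ≤ d →
      ϕ i = φ 1 * (∑ j ∈ Finset.range i, (θ j - θ (d - j)) / (θ 0 - θ d)) +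
        (θs i - θs 0) * (θ (d - i + 1) - θ 0)) ∧
    (∃ β : K, ∀ i : ℕ, 2 ≤ i → i ≤ d - 1 →
      (θ (i - 2) - θ (i + 1)) / (θ (i - 1) - θ i) = β ∧
      (θs (i - 2) - θs (i + 1)) / (θs (i - 1) - θs i) = β) := by
  replace hθ (i : ℕ) (hi : i ≤ d) : θ i = eigenvalue q s i := hθ i hi
  replace hθs (i : ℕ) (hi : i ≤ d) : θs i = dualEigenvalue q i := hθs i hi
  replace hφ (i : ℕ) (h₁ : 1 ≤ i) (hi : i ≤ d) : φ i = firstSplit q r d i := hφ i h₁ hi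
  replace hϕ (i : ℕ) (h₁ : 1 ≤ i) (hi : i ≤ d) : ϕ i = secondSplit q s r d i := hϕ i h₁ hi
  have hne (i j : ℕ) (hij : i < j) (hj : j ≤ d) : eigenvalue q s i ≠ eigenvalue q s j := by
    simpa only [hθ i (by omega), hθ j hj] using hθ_ne i j hij hj
  have hsum (i : ℕ) (hi : i ≤ d) :
      ∑ j ∈ Finset.range i, (θ j - θ (d - j)) / (θ 0 - θ d) = ∑ j ∈ Finset.range i,
        (eigenvalue q s j - eigenvalue q s (d - j)) / (eigenvalue q s 0 - eigenvalue q s d) := by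
    refine Finset.sum_congr rfl fun j hj => ?_
    have hjd : j ≤ d := (Finset.mem_range.1 hj).le.trans hi
    rw [hθ j hjd, hθ (d - j) (by omega), hθ 0 (by omega), hθ d le_rfl, Nat.cast_sub hjd,
      Nat.cast_zero]
  refine ⟨fun i h₁ hi => ?_, fun i h₁ hi => ?_, q + 1 + q⁻¹, fun i h₂ hi => ?_⟩
  · rw [hsum i hi, hφ i h₁ hi, hϕ 1 le_rfl (by omega), hθs i hi, hθs 0 (by omega),
      hθ (i - 1) (by omega), hθ d le_rfl]
    push_cast [h₁]
    exact firstSplit_eq_secondSplit_one_mul_sum_add hq r (hne 0 d (by omega) le_rfl) i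
  · rw [hsum i hi, hϕ i h₁ hi, hφ 1 le_rfl (by omega), hθs i hi, hθs 0 (by omega),
      hθ (d - i + 1) (by omega), hθ 0 (by omega)]
    push_cast [hi]
    exact secondSplit_eq_firstSplit_one_mul_sum_add hq r (hne 0 d (by omega) le_rfl) i
  · have hadj : eigenvalue q s (i - 1) ≠ eigenvalue q s i := by
      simpa [Nat.cast_sub (show 1 ≤ i by omega)] using hne (i - 1) i (by omega) (by omega)
    rw [hθ (i - 2) (by omega), hθ (i + 1) (by omega), hθ (i - 1) (by omega), hθ i (by omega),
      hθs (i - 2) (by omega), hθs (i + 1) (by omega), hθs (i - 1) (by omega), hθs i (by omega)]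
    push_cast [h₂, show 1 ≤ i by omega]
    exact ⟨eigenvalue_sub_div_eq hq hadj,
      dualEigenvalue_sub_div_eq hq (dualEigenvalue_ne_of_eigenvalue_ne hq hadj)⟩

/-- The dual q-Hahn data forms a parameter array: PA3, PA4 and PA5 hold. -/
theorem dual_qHahn_parameter_array
    {K : Type*} [Field K] [IsAlgClosed K] (hchar : ringChar K ≠ 2)
    (d : ℕ) (q s r : K) (hq : q ≠ 0) (hs : s ≠ 0) (hr : r ≠ 0)
    (θ θs φ ϕ : ℕ → K)
    (hθ : ∀ i : ℕ, i ≤ d → θ i = q ^ (-(i : ℤ)) + s * q ^ ((i : ℤ) + 1))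
    (hθs : ∀ i : ℕ, i ≤ d → θs i = q ^ (-(i : ℤ)))
    (hφ : ∀ i : ℕ, 1 ≤ i → i ≤ d →
      φ i = q ^ (1 - 2 * (i : ℤ)) *
        (1 - q ^ (i : ℤ)) * (1 - q ^ ((i : ℤ) - d - 1)) * (1 - r * q ^ (i : ℤ)))
    (hϕ : ∀ i : ℕ, 1 ≤ i → i ≤ d →
      ϕ i = q ^ ((d : ℤ) + 2 - 2 * i) *
        (1 - q ^ (i : ℤ)) * (1 - q ^ ((i : ℤ) - d - 1)) * (s - r * q ^ ((i : ℤ) - d - 1)))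
    (hPA1 : ∀ i j : ℕ, i < j → j ≤ d → θ i ≠ θ j ∧ θs i ≠ θs j)
    (hPA2 : ∀ i : ℕ, 1 ≤ i → i ≤ d → φ i ≠ 0 ∧ ϕ i ≠ 0) :
    (∀ i : ℕ, 1 ≤ i → i ≤ d →
      φ i = ϕ 1 * (∑ j ∈ Finset.range i, (θ j - θ (d - j)) / (θ 0 - θ d)) +
        (θs i - θs 0) * (θ (i - 1) - θ d)) ∧
    (∀ i : ℕ, 1 ≤ i → i ≤ d →
      ϕ i = φ 1 * (∑ j ∈ Finset.range i, (θ j - θ (d - j)) / (θ 0 - θ d)) +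
        (θs i - θs 0) * (θ (d - i + 1) - θ 0)) ∧
    (∃ β : K, ∀ i : ℕ, 2 ≤ i → i ≤ d - 1 →
      (θ (i - 2) - θ (i + 1)) / (θ (i - 1) - θ i) = β ∧
      (θs (i - 2) - θs (i + 1)) / (θs (i - 1) - θs i) = β) :=
  dual_qHahn_parameter_array_general d q s r hq θ θs φ ϕ hθ hθs hφ hϕ
    fun i j hij hj => (hPA1 i j hij hj).1
end

section
/- (q-Krawtchouk parameter array.) Let d be a non-negative integer and let q, s* be nonzero scalars in K. Define, for 0 ≤ i ≤ d, θ_i = q^{−i} and θ*_i = q^{−i} + s*·q^{i+1}, and, for 1 ≤ i ≤ d, φ_i = q^{1−2i}·(1 − q^i)(1 − q^{i−d−1}) and ϕ_i = s*·q·(1 − q^i)(1 − q^{i−d−1}). Assume θ_i ≠ θ_j and θ*_i ≠ θ*_j for 0 ≤ i < j ≤ d, and φ_i ≠ 0 and ϕ_i ≠ 0 for 1 ≤ i ≤ d. Then (θ_0,…,θ_d; θ*_0,…,θ*_d; φ_1,…,φ_d; ϕ_1,…,ϕ_d) is a parameter array over K of diameter d, i.e., conditions PA3, PA4 and PA5 also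 hold. -/
/-!
Write `ϑ i = ∑_{j < i} (θ j - θ (d - j)) / (θ 0 - θ d)`. Summing geometric series shows that
`ϕ 1 * ϑ i` and `φ 1 * ϑ i` are `ss * q * w * q ^ (1 - i)` and `w * q ^ (-i)`, where
`w = (1 - q ^ i) * (1 - q ^ (i - d - 1))`. The factor `1 - q ^ i` also divides `θs i - θs 0`, with
quotient `q ^ (-i) - ss * q`, while `θ (i - 1) - θ d` and `θ (d - i + 1) - θ 0` are
`q ^ (1 - i)` and `-1` times the other factor of `w`. Cancelling `w` reduces PA3 and PA4 to
`q ^ (-i) = ss * q + (q ^ (-i) - ss * q)` and `ss * q = q ^ (-i) - (q ^ (-i) - ss * q)`.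
PA5 holds because `θ` and `θs` are both combinations of the sequences `q ^ (-i)` and `q ^ i`, each
of which satisfies `x (i - 2) - x (i + 1) = (q + 1 + q⁻¹) * (x (i - 1) - x i)`.
-/

open Finset

section

variable {K : Type*} [Field K] {q ss : K} {d : ℕ} {θ θs φ ϕ : ℕ → K}

theorem one_sub_mul_sum_zpow_neg_sub_mul_pow (hq : q ≠ 0) (c : K) (n : ℕ) :
    (1 - q) * ∑ j ∈ range n, (q ^ (-(j : ℤ)) - c * q ^ j) =
      (1 - q ^ n) * (q ^ (1 - (n : ℤ)) - c) := by
  have sum_inv : (1 - q) * ∑ j ∈ range n, q⁻¹ ^ j = (1 - q ^ n) * (q * (q ^ n)⁻¹) :=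
    calc (1 - q) * ∑ j ∈ range n, q⁻¹ ^ j
        = -q * ((1 - q⁻¹) * ∑ j ∈ range n, q⁻¹ ^ j) := by field_simp; ring
      _ = -q * (1 - q⁻¹ ^ n) := by rw [mul_neg_geom_sum]
      _ = (1 - q ^ n) * (q * (q ^ n)⁻¹) := by rw [inv_pow]; field_simp; ring
  simp only [zpow_neg, zpow_natCast, ← inv_pow, sum_sub_distrib, ← mul_sum]
  rw [mul_sub, sum_inv, mul_left_comm (1 - q) c, mul_neg_geom_sum, zpow_sub₀ hq, zpow_one,
    zpow_natCast]
  ring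

theorem zpow_one_sub_sub_zpow_neg (hq : q ≠ 0) (i d : ℤ) :
    q ^ (1 - i) - q ^ (-d) = q ^ (1 - i) * (1 - q ^ (i - d - 1)) := by
  rw [mul_sub, mul_one, ← zpow_add₀ hq]
  congr 2
  ring

theorem qKrawtchouk_mul_sum_eigenvalue_sub_reverse_div (hq : q ≠ 0)
    (hθ : ∀ i ≤ d, θ i = q ^ (-(i : ℤ))) (hne : θ 0 ≠ θ d) {i : ℕ} (hi : i ≤ d) :
    (1 - q) * (1 - q ^ (-(d : ℤ))) * ∑ j ∈ range i, (θ j - θ (d - j)) / (θ 0 - θ d) =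
      (1 - q ^ i) * (q ^ (1 - (i : ℤ)) * (1 - q ^ ((i : ℤ) - d - 1))) := by
  have reverse (j : ℕ) (hj : j ≤ d) : θ (d - j) = q ^ (-(d : ℤ)) * q ^ j := by
    rw [hθ _ (Nat.sub_le d j), Nat.cast_sub hj, ← zpow_natCast q j, ← zpow_add₀ hq]
    congr 1
    ring
  have range_le (j : ℕ) (hj : j ∈ range i) : j ≤ d := (mem_range.mp hj).le.trans hi
  have denominator : 1 - q ^ (-(d : ℤ)) = θ 0 - θ d := by
    simp [hθ 0 d.zero_le, hθ d le_rfl]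
  calc (1 - q) * (1 - q ^ (-(d : ℤ))) * ∑ j ∈ range i, (θ j - θ (d - j)) / (θ 0 - θ d)
      = (1 - q) * ∑ j ∈ range i, (θ j - θ (d - j)) := by
        rw [← sum_div, denominator, mul_assoc, mul_div_cancel₀ _ (sub_ne_zero.mpr hne)]
    _ = (1 - q) * ∑ j ∈ range i, (q ^ (-(j : ℤ)) - q ^ (-(d : ℤ)) * q ^ j) := by
        congr 1
        exact sum_congr rfl fun j hj ↦ by
          rw [hθ j (range_le j hj), reverse j (range_le j hj)]
    _ = (1 - q ^ i) * (q ^ (1 - (i : ℤ)) * (1 - q ^ ((i : ℤ) - d - 1))) := by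
        rw [one_sub_mul_sum_zpow_neg_sub_mul_pow hq, zpow_one_sub_sub_zpow_neg hq]

theorem qKrawtchouk_dual_eigenvalue_sub_zero (hq : q ≠ 0)
    (hθs : ∀ i ≤ d, θs i = q ^ (-(i : ℤ)) + ss * q ^ ((i : ℤ) + 1)) {i : ℕ} (hi : i ≤ d) :
    θs i - θs 0 = (1 - q ^ i) * (q ^ (-(i : ℤ)) - ss * q) := by
  rw [hθs i hi, hθs 0 d.zero_le, zpow_add_one₀ hq, zpow_neg, zpow_natCast]
  simp only [Nat.cast_zero, neg_zero, zpow_zero, zero_add, zpow_one]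
  field_simp
  ring

theorem qKrawtchouk_PA3 (hq : q ≠ 0) (hθ : ∀ i ≤ d, θ i = q ^ (-(i : ℤ)))
    (hθs : ∀ i ≤ d, θs i = q ^ (-(i : ℤ)) + ss * q ^ ((i : ℤ) + 1))
    (hφ : ∀ i, 1 ≤ i → i ≤ d →
      φ i = q ^ (1 - 2 * (i : ℤ)) * (1 - q ^ (i : ℤ)) * (1 - q ^ ((i : ℤ) - d - 1)))
    (hϕ : ∀ i, 1 ≤ i → i ≤ d →
      ϕ i = ss * q * (1 - q ^ (i : ℤ)) * (1 - q ^ ((i : ℤ) - d - 1)))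
    (hne : θ 0 ≠ θ d) {i : ℕ} (h1i : 1 ≤ i) (hid : i ≤ d) :
    φ i = ϕ 1 * (∑ j ∈ range i, (θ j - θ (d - j)) / (θ 0 - θ d)) +
      (θs i - θs 0) * (θ (i - 1) - θ d) := by
  have hϕ1 : ϕ 1 = ss * q * ((1 - q) * (1 - q ^ (-(d : ℤ)))) := by
    rw [hϕ 1 le_rfl (h1i.trans hid), Nat.cast_one, zpow_one, sub_sub_cancel_left, mul_assoc]
  have hθ_sub : θ (i - 1) - θ d = q ^ (1 - (i : ℤ)) * (1 - q ^ ((i : ℤ) - d - 1)) := by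
    rw [hθ _ ((Nat.sub_le i 1).trans hid), hθ d le_rfl, Nat.cast_sub h1i, Nat.cast_one, neg_sub,
      zpow_one_sub_sub_zpow_neg hq]
  have hpow : q ^ (1 - 2 * (i : ℤ)) = q ^ (1 - (i : ℤ)) * q ^ (-(i : ℤ)) := by
    rw [← zpow_add₀ hq]
    congr 1
    ring
  rw [hϕ1, mul_assoc (ss * q), qKrawtchouk_mul_sum_eigenvalue_sub_reverse_div hq hθ hne hid,
    qKrawtchouk_dual_eigenvalue_sub_zero hq hθs hid, hθ_sub, hφ i h1i hid, hpow, zpow_natCast]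
  ring

theorem qKrawtchouk_PA4 (hq : q ≠ 0) (hθ : ∀ i ≤ d, θ i = q ^ (-(i : ℤ)))
    (hθs : ∀ i ≤ d, θs i = q ^ (-(i : ℤ)) + ss * q ^ ((i : ℤ) + 1))
    (hφ : ∀ i, 1 ≤ i → i ≤ d →
      φ i = q ^ (1 - 2 * (i : ℤ)) * (1 - q ^ (i : ℤ)) * (1 - q ^ ((i : ℤ) - d - 1)))
    (hϕ : ∀ i, 1 ≤ i → i ≤ d →
      ϕ i = ss * q * (1 - q ^ (i : ℤ)) * (1 - q ^ ((i : ℤ) - d - 1)))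
    (hne : θ 0 ≠ θ d) {i : ℕ} (h1i : 1 ≤ i) (hid : i ≤ d) :
    ϕ i = φ 1 * (∑ j ∈ range i, (θ j - θ (d - j)) / (θ 0 - θ d)) +
      (θs i - θs 0) * (θ (d - i + 1) - θ 0) := by
  have hφ1 : φ 1 = q⁻¹ * ((1 - q) * (1 - q ^ (-(d : ℤ)))) := by
    rw [hφ 1 le_rfl (h1i.trans hid), Nat.cast_one, zpow_one, sub_sub_cancel_left, mul_assoc,
      ← zpow_neg_one]
    norm_num
  have hθ_sub : θ (d - i + 1) - θ 0 = -(1 - q ^ ((i : ℤ) - d - 1)) := by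
    rw [hθ _ (by lia), hθ 0 d.zero_le, Nat.cast_zero, neg_zero, zpow_zero, neg_sub]
    congr 2
    push_cast [hid]
    ring
  have hpow : q ^ (1 - (i : ℤ)) = q * q ^ (-(i : ℤ)) := by
    rw [sub_eq_add_neg, zpow_one_add₀ hq]
  rw [hφ1, mul_assoc q⁻¹, qKrawtchouk_mul_sum_eigenvalue_sub_reverse_div hq hθ hne hid,
    qKrawtchouk_dual_eigenvalue_sub_zero hq hθs hid, hθ_sub, hϕ i h1i hid, hpow, zpow_natCast]
  field_simp
  ring

theorem sub_div_sub_eq_of_eq_zpow_neg_add_zpow (hq : q ≠ 0) (a b : K) {x : ℕ → K}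
    (hx : ∀ i ≤ d, x i = a * q ^ (-(i : ℤ)) + b * q ^ (i : ℤ)) {i : ℕ} (h2i : 2 ≤ i)
    (hid : i + 1 ≤ d) (hne : x (i - 1) ≠ x i) :
    (x (i - 2) - x (i + 1)) / (x (i - 1) - x i) = q + 1 + q⁻¹ := by
  obtain ⟨k, rfl⟩ := Nat.exists_eq_add_of_le' h2i
  rw [div_eq_iff (sub_ne_zero.mpr hne), hx _ (by lia), hx _ hid, hx _ (by lia), hx _ (by lia)]
  simp only [Nat.add_sub_cancel, show k + 2 - 1 = k + 1 from rfl, zpow_neg, zpow_natCast, pow_succ]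
  field_simp
  ring

theorem qKrawtchouk_eigenvalue_pred_ne (hq : q ≠ 0) (hθ : ∀ i ≤ d, θ i = q ^ (-(i : ℤ)))
    (hne : θ 0 ≠ θ d) {i : ℕ} (h1i : 1 ≤ i) (hid : i ≤ d) : θ (i - 1) ≠ θ i := by
  obtain ⟨k, rfl⟩ := Nat.exists_eq_add_of_le' h1i
  intro heq
  have hq1 : q = 1 := by
    rw [Nat.add_sub_cancel, hθ k (by lia), hθ (k + 1) hid] at heq
    simpa [zpow_add₀ hq, hq] using heq
  exact hne (by simp [hθ 0 d.zero_le, hθ d le_rfl, hq1])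

theorem qKrawtchouk_parameter_array_general (hq : q ≠ 0)
    (hθ : ∀ i ≤ d, θ i = q ^ (-(i : ℤ)))
    (hθs : ∀ i ≤ d, θs i = q ^ (-(i : ℤ)) + ss * q ^ ((i : ℤ) + 1))
    (hφ : ∀ i, 1 ≤ i → i ≤ d →
      φ i = q ^ (1 - 2 * (i : ℤ)) * (1 - q ^ (i : ℤ)) * (1 - q ^ ((i : ℤ) - d - 1)))
    (hϕ : ∀ i, 1 ≤ i → i ≤ d →
      ϕ i = ss * q * (1 - q ^ (i : ℤ)) * (1 - q ^ ((i : ℤ) - d - 1)))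
    (hθ_ends : 0 < d → θ 0 ≠ θ d)
    (hθs_adj : ∀ i, 2 ≤ i → i ≤ d - 1 → θs (i - 1) ≠ θs i) :
    (∀ i : ℕ, 1 ≤ i → i ≤ d →
      φ i = ϕ 1 * (∑ j ∈ range i, (θ j - θ (d - j)) / (θ 0 - θ d)) +
        (θs i - θs 0) * (θ (i - 1) - θ d)) ∧
    (∀ i : ℕ, 1 ≤ i → i ≤ d →
      ϕ i = φ 1 * (∑ j ∈ range i, (θ j - θ (d - j)) / (θ 0 - θ d)) +
        (θs i - θs 0) * (θ (d - i + 1) - θ 0)) ∧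
    (∃ β : K, ∀ i : ℕ, 2 ≤ i → i ≤ d - 1 →
      (θ (i - 2) - θ (i + 1)) / (θ (i - 1) - θ i) = β ∧
      (θs (i - 2) - θs (i + 1)) / (θs (i - 1) - θs i) = β) := by
  refine ⟨fun i h1i hid ↦ qKrawtchouk_PA3 hq hθ hθs hφ hϕ (hθ_ends (by lia)) h1i hid,
    fun i h1i hid ↦ qKrawtchouk_PA4 hq hθ hθs hφ hϕ (hθ_ends (by lia)) h1i hid,
    q + 1 + q⁻¹, fun i h2i hid ↦ ⟨?_, ?_⟩⟩
  · exact sub_div_sub_eq_of_eq_zpow_neg_add_zpow (d := d) hq 1 0 (fun j hj ↦ by simp [hθ j hj]) h2i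
      (by lia) (qKrawtchouk_eigenvalue_pred_ne hq hθ (hθ_ends (by lia)) (by lia) (by lia))
  · refine sub_div_sub_eq_of_eq_zpow_neg_add_zpow (d := d) hq 1 (ss * q) (fun j hj ↦ ?_) h2i
      (by lia) (hθs_adj i h2i hid)
    rw [hθs j hj, zpow_add_one₀ hq]
    ring

end

/-- The q-Krawtchouk data forms a parameter array: PA3, PA4 and PA5 hold. -/
theorem qKrawtchouk_parameter_array
    {K : Type*} [Field K] [IsAlgClosed K] (hchar : ringChar K ≠ 2)
    (d : ℕ) (q ss : K) (hq : q ≠ 0) (hss : ss ≠ 0)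
    (θ θs φ ϕ : ℕ → K)
    (hθ : ∀ i : ℕ, i ≤ d → θ i = q ^ (-(i : ℤ)))
    (hθs : ∀ i : ℕ, i ≤ d → θs i = q ^ (-(i : ℤ)) + ss * q ^ ((i : ℤ) + 1))
    (hφ : ∀ i : ℕ, 1 ≤ i → i ≤ d →
      φ i = q ^ (1 - 2 * (i : ℤ)) * (1 - q ^ (i : ℤ)) * (1 - q ^ ((i : ℤ) - d - 1)))
    (hϕ : ∀ i : ℕ, 1 ≤ i → i ≤ d →
      ϕ i = ss * q * (1 - q ^ (i : ℤ)) * (1 - q ^ ((i : ℤ) - d - 1)))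
    (hPA1 : ∀ i j : ℕ, i < j → j ≤ d → θ i ≠ θ j ∧ θs i ≠ θs j)
    (hPA2 : ∀ i : ℕ, 1 ≤ i → i ≤ d → φ i ≠ 0 ∧ ϕ i ≠ 0) :
    (∀ i : ℕ, 1 ≤ i → i ≤ d →
      φ i = ϕ 1 * (∑ j ∈ Finset.range i, (θ j - θ (d - j)) / (θ 0 - θ d)) +
        (θs i - θs 0) * (θ (i - 1) - θ d)) ∧
    (∀ i : ℕ, 1 ≤ i → i ≤ d →
      ϕ i = φ 1 * (∑ j ∈ Finset.range i, (θ j - θ (d - j)) / (θ 0 - θ d)) +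
        (θs i - θs 0) * (θ (d - i + 1) - θ 0)) ∧
    (∃ β : K, ∀ i : ℕ, 2 ≤ i → i ≤ d - 1 →
      (θ (i - 2) - θ (i + 1)) / (θ (i - 1) - θ i) = β ∧
      (θs (i - 2) - θs (i + 1)) / (θs (i - 1) - θs i) = β) :=
  qKrawtchouk_parameter_array_general hq hθ hθs hφ hϕ (fun hd ↦ (hPA1 0 d hd le_rfl).1)
    fun i h2i hid ↦ (hPA1 (i - 1) i (by lia) (by lia)).2
end

section
/- (Quantum q-Krawtchouk parameter array.) Let d be a non-negative integer and let q, r be nonzero scalars in K. Define, for 0 ≤ i ≤ d, θ_i = q^{i+1} and θ*_i = q^{−i}, and, for 1 ≤ i ≤ d, φ_i = −r·q^{1−i}·(1 − q^i)(1 − q^{i−d−1}) and ϕ_i = q^{d+2−2i}·(1 − q^i)(1 − q^{i−d−1})(1 − r·q^{i−d−1}). Assume θ_i ≠ θ_j and θ*_i ≠ θ*_j for 0 ≤ i < j ≤ d, and φ_i ≠ 0 and ϕ_i ≠ 0 for 1 ≤ i ≤ d. Then (θ_0,…,θ_d; θ*_0,…,θ*_d; φ_1,…,φ_d; ϕ_1,…,ϕ_d)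 is a parameter array over K of diameter d, i.e., conditions PA3, PA4 and PA5 also hold. -/
/-!
Put `N i = (1 - q ^ i) * (1 - q ^ (d + 1 - i))` and write `ϑ i` for the sum in PA3 and PA4. Then
`φ i = r * q ^ (-d) * N i`, `ϕ i = (r * q ^ (-d) - q ^ (1 - i)) * N i` and `ϑ i = N i / N 1`, while
the products of differences in PA3 and PA4 are `N i` and `-q ^ (1 - i) * N i`. Hence both conditions
are `N i` times a trivial relation between `r * q ^ (-d)` and `q ^ (1 - i)`. For PA5, `θ` and `θ*`
are geometric with ratios `q` and `q⁻¹`, and the quotient `q + 1 + q⁻¹` obtained from a geometric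
sequence is invariant under `q ↦ q⁻¹`.
-/

theorem one_sub_mul_sum_pow_sub_pow {R : Type*} [CommRing R] (q : R) {d i : ℕ} (hi : i ≤ d + 1) :
    (1 - q) * ∑ j ∈ Finset.range i, (q ^ j - q ^ (d - j)) =
      (1 - q ^ i) * (1 - q ^ (d + 1 - i)) := by
  induction i with
  | zero => simp
  | succ i ih =>
    obtain ⟨k, rfl⟩ := Nat.exists_eq_add_of_le (Nat.le_of_succ_le_succ hi)
    rw [Finset.sum_range_succ, mul_add, ih (by omega), Nat.add_sub_cancel_left,
      show i + k + 1 - i = k + 1 by omega, show i + k + 1 - (i + 1) = k by omega]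
    ring

section Field

variable {K : Type*} [Field K] {q : K}

theorem geometric_sub_div_sub_eq {u : ℕ → K} {c : K} {d i : ℕ} (hq : q ≠ 0) (hq1 : q ≠ 1)
    (hc : c ≠ 0) (hu : ∀ j ≤ d, u j = c * q ^ j) (h2 : 2 ≤ i) (hi : i + 1 ≤ d) :
    (u (i - 2) - u (i + 1)) / (u (i - 1) - u i) = q + 1 + q⁻¹ := by
  obtain ⟨m, rfl⟩ := Nat.exists_eq_add_of_le' h2
  have hsub : 1 - q ≠ 0 := sub_ne_zero.mpr hq1.symm
  have hden : c * q ^ (m + 1) - c * q ^ (m + 2) = c * q ^ m * q * (1 - q) := by ring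
  rw [Nat.add_sub_cancel, show m + 2 - 1 = m + 1 by omega, hu m (by omega),
    hu (m + 2 + 1) (by omega), hu (m + 1) (by omega), hu (m + 2) (by omega), hden]
  field_simp
  ring

/-- The product `(1 - q ^ i) * (1 - q ^ (d + 1 - i))`, symmetric under `i ↦ d + 1 - i`, of which
the first split sequence `φ` and the second split sequence `ϕ` of the quantum `q`-Krawtchouk array
are multiples. The indices are integers so that `d + 1 - i` is not truncated. -/
def qKrawtchoukFactor (q : K) (d i : ℤ) : K :=
  (1 - q ^ i) * (1 - q ^ (d + 1 - i))

namespace qKrawtchoukFactor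

theorem at_one (q : K) (d : ℕ) : qKrawtchoukFactor q d 1 = (1 - q) * (1 - q ^ d) := by
  simp [qKrawtchoukFactor]

theorem at_one_ne_zero {d : ℕ} (hqd : q ^ d ≠ 1) : qKrawtchoukFactor q d 1 ≠ 0 := by
  have hq1 : q ≠ 1 := fun h => hqd (by rw [h, one_pow])
  rw [at_one]
  exact mul_ne_zero (sub_ne_zero.mpr hq1.symm) (sub_ne_zero.mpr hqd.symm)

theorem natCast_eq {d i : ℕ} (hi : i ≤ d + 1) :
    qKrawtchoukFactor q d i = (1 - q ^ i) * (1 - q ^ (d + 1 - i)) := by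
  have hcast : (d : ℤ) + 1 - i = (d + 1 - i : ℕ) := by omega
  rw [qKrawtchoukFactor, hcast, zpow_natCast, zpow_natCast]

theorem one_sub_zpow_mul_one_sub_zpow (hq : q ≠ 0) (d i : ℤ) :
    (1 - q ^ i) * (1 - q ^ (i - d - 1)) = -q ^ (i - d - 1) * qKrawtchoukFactor q d i := by
  have hinv : q ^ (i - d - 1) * q ^ (d + 1 - i) = 1 := by
    rw [← zpow_add₀ hq, show i - d - 1 + (d + 1 - i) = 0 by ring, zpow_zero]
  rw [qKrawtchoukFactor]
  linear_combination (q ^ i - 1) * hinv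

theorem firstSplit_eq (hq : q ≠ 0) (r : K) (d i : ℤ) :
    -r * q ^ (1 - i) * (1 - q ^ i) * (1 - q ^ (i - d - 1)) =
      r * q ^ (-d) * qKrawtchoukFactor q d i := by
  have hexp : q ^ (-d) = q ^ (1 - i) * q ^ (i - d - 1) := by
    rw [← zpow_add₀ hq]
    ring_nf
  rw [mul_assoc, one_sub_zpow_mul_one_sub_zpow hq, hexp]
  ring

theorem secondSplit_eq (hq : q ≠ 0) (r : K) (d i : ℤ) :
    q ^ (d + 2 - 2 * i) * (1 - q ^ i) * (1 - q ^ (i - d - 1)) * (1 - r * q ^ (i - d - 1)) =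
      (r * q ^ (-d) - q ^ (1 - i)) * qKrawtchoukFactor q d i := by
  have hexp₁ : q ^ (1 - i) = q ^ (d + 2 - 2 * i) * q ^ (i - d - 1) := by
    rw [← zpow_add₀ hq]
    ring_nf
  have hexp₂ : q ^ (-d) = q ^ (1 - i) * q ^ (i - d - 1) := by
    rw [← zpow_add₀ hq]
    ring_nf
  rw [mul_assoc (q ^ _), one_sub_zpow_mul_one_sub_zpow hq, hexp₂, hexp₁]
  ring

theorem dual_sub_mul_sub_last {θ θs : ℕ → K} {d i : ℕ} (hq : q ≠ 0)
    (hθ : ∀ j ≤ d, θ j = q ^ ((j : ℤ) + 1)) (hθs : ∀ j ≤ d, θs j = q ^ (-(j : ℤ)))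
    (h1 : 1 ≤ i) (hi : i ≤ d) :
    (θs i - θs 0) * (θ (i - 1) - θ d) = qKrawtchoukFactor q d i := by
  have hθ_pred : θ (i - 1) = q ^ (i : ℤ) := by
    rw [hθ (i - 1) (by omega), Nat.cast_sub h1, Nat.cast_one, sub_add_cancel]
  have hinv : q ^ (-(i : ℤ)) * q ^ (i : ℤ) = 1 := by
    rw [← zpow_add₀ hq, neg_add_cancel, zpow_zero]
  have hexp : q ^ ((d : ℤ) + 1 - i) = q ^ ((d : ℤ) + 1) * q ^ (-(i : ℤ)) := by
    rw [← zpow_add₀ hq, sub_eq_add_neg]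
  rw [hθs i hi, hθs 0 d.zero_le, Nat.cast_zero, neg_zero, zpow_zero, hθ_pred, hθ d le_rfl,
    qKrawtchoukFactor, hexp]
  linear_combination (1 - q ^ ((d : ℤ) + 1)) * hinv

theorem dual_sub_mul_sub_first {θ θs : ℕ → K} {d i : ℕ} (hq : q ≠ 0)
    (hθ : ∀ j ≤ d, θ j = q ^ ((j : ℤ) + 1)) (hθs : ∀ j ≤ d, θs j = q ^ (-(j : ℤ)))
    (h1 : 1 ≤ i) (hi : i ≤ d) :
    (θs i - θs 0) * (θ (d - i + 1) - θ 0) =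
      -q ^ (1 - (i : ℤ)) * qKrawtchoukFactor q d i := by
  have hθ_succ : θ (d - i + 1) = q * q ^ ((d : ℤ) + 1 - i) := by
    rw [hθ (d - i + 1) (by omega), zpow_add_one₀ hq, mul_comm, Nat.cast_add, Nat.cast_sub hi,
      Nat.cast_one, sub_add_eq_add_sub]
  have hθ_zero : θ 0 = q := by simp [hθ 0 d.zero_le]
  have hinv : q ^ (-(i : ℤ)) * q ^ (i : ℤ) = 1 := by
    rw [← zpow_add₀ hq, neg_add_cancel, zpow_zero]
  have hexp : q ^ (1 - (i : ℤ)) = q * q ^ (-(i : ℤ)) := by rw [sub_eq_add_neg, zpow_one_add₀ hq]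
  rw [hθs i hi, hθs 0 d.zero_le, Nat.cast_zero, neg_zero, zpow_zero, hθ_succ, hθ_zero,
    qKrawtchoukFactor, hexp]
  linear_combination (q * q ^ ((d : ℤ) + 1 - i) - q) * hinv

theorem sum_geometric_sub_div_eq {u : ℕ → K} {c : K} {d i : ℕ} (hqd : q ^ d ≠ 1) (hc : c ≠ 0)
    (hu : ∀ j ≤ d, u j = c * q ^ j) (hi : i ≤ d) :
    ∑ j ∈ Finset.range i, (u j - u (d - j)) / (u 0 - u d) =
      qKrawtchoukFactor q d i / qKrawtchoukFactor q d 1 := by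
  have hden : u 0 - u d = c * (1 - q ^ d) := by
    rw [hu 0 d.zero_le, hu d le_rfl]
    ring
  have hden_ne : c * (1 - q ^ d) ≠ 0 := mul_ne_zero hc (sub_ne_zero.mpr hqd.symm)
  have hnum : ∑ j ∈ Finset.range i, (u j - u (d - j)) =
      c * ∑ j ∈ Finset.range i, (q ^ j - q ^ (d - j)) := by
    rw [Finset.mul_sum]
    refine Finset.sum_congr rfl fun j hj => ?_
    rw [hu j ((Finset.mem_range.mp hj).le.trans hi), hu (d - j) (d.sub_le j), mul_sub]
  have hi' : i ≤ d + 1 := hi.trans d.le_succ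
  rw [← Finset.sum_div, hnum, hden, div_eq_div_iff hden_ne (at_one_ne_zero hqd), at_one,
    natCast_eq hi']
  linear_combination c * (1 - q ^ d) * one_sub_mul_sum_pow_sub_pow q hi'

end qKrawtchoukFactor

end Field

open qKrawtchoukFactor in
theorem quantum_qKrawtchouk_parameter_array_general
    {K : Type*} [Field K] (d : ℕ) (q r : K) (hq : q ≠ 0)
    (θ θs φ ϕ : ℕ → K)
    (hθ : ∀ i : ℕ, i ≤ d → θ i = q ^ ((i : ℤ) + 1))
    (hθs : ∀ i : ℕ, i ≤ d → θs i = q ^ (-(i : ℤ)))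
    (hφ : ∀ i : ℕ, 1 ≤ i → i ≤ d →
      φ i = -r * q ^ (1 - (i : ℤ)) * (1 - q ^ (i : ℤ)) * (1 - q ^ ((i : ℤ) - d - 1)))
    (hϕ : ∀ i : ℕ, 1 ≤ i → i ≤ d →
      ϕ i = q ^ ((d : ℤ) + 2 - 2 * i) *
        (1 - q ^ (i : ℤ)) * (1 - q ^ ((i : ℤ) - d - 1)) * (1 - r * q ^ ((i : ℤ) - d - 1)))
    (hθd : 0 < d → θ 0 ≠ θ d) :
    (∀ i : ℕ, 1 ≤ i → i ≤ d →
      φ i = ϕ 1 * (∑ j ∈ Finset.range i, (θ j - θ (d - j)) / (θ 0 - θ d)) +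
        (θs i - θs 0) * (θ (i - 1) - θ d)) ∧
    (∀ i : ℕ, 1 ≤ i → i ≤ d →
      ϕ i = φ 1 * (∑ j ∈ Finset.range i, (θ j - θ (d - j)) / (θ 0 - θ d)) +
        (θs i - θs 0) * (θ (d - i + 1) - θ 0)) ∧
    (∃ β : K, ∀ i : ℕ, 2 ≤ i → i ≤ d - 1 →
      (θ (i - 2) - θ (i + 1)) / (θ (i - 1) - θ i) = β ∧
      (θs (i - 2) - θs (i + 1)) / (θs (i - 1) - θs i) = β) := by
  have hθgeom : ∀ i ≤ d, θ i = q * q ^ i := fun i hi => by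
    rw [hθ i hi, zpow_add_one₀ hq, zpow_natCast, mul_comm]
  have hθsgeom : ∀ i ≤ d, θs i = 1 * q⁻¹ ^ i := fun i hi => by
    rw [hθs i hi, zpow_neg, zpow_natCast, inv_pow, one_mul]
  have hqd : 0 < d → q ^ d ≠ 1 := fun hd hqd => hθd hd (by simp [hθgeom, hqd])
  have hφN : ∀ i : ℕ, 1 ≤ i → i ≤ d → φ i = r * q ^ (-(d : ℤ)) * qKrawtchoukFactor q d i :=
    fun i h1 hi => (hφ i h1 hi).trans (firstSplit_eq hq r d i)
  have hϕN : ∀ i : ℕ, 1 ≤ i → i ≤ d →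
      ϕ i = (r * q ^ (-(d : ℤ)) - q ^ (1 - (i : ℤ))) * qKrawtchoukFactor q d i :=
    fun i h1 hi => (hϕ i h1 hi).trans (secondSplit_eq hq r d i)
  refine ⟨fun i h1 hi => ?_, fun i h1 hi => ?_, q + 1 + q⁻¹, fun i h2 hi => ?_⟩
  · have hN := at_one_ne_zero (hqd (by omega))
    rw [sum_geometric_sub_div_eq (hqd (by omega)) hq hθgeom hi,
      dual_sub_mul_sub_last hq hθ hθs h1 hi, hφN i h1 hi, hϕN 1 le_rfl (by omega), Nat.cast_one,
      sub_self, zpow_zero]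
    field_simp
    ring
  · have hN := at_one_ne_zero (hqd (by omega))
    rw [sum_geometric_sub_div_eq (hqd (by omega)) hq hθgeom hi,
      dual_sub_mul_sub_first hq hθ hθs h1 hi, hϕN i h1 hi, hφN 1 le_rfl (by omega), Nat.cast_one]
    field_simp
    ring
  · have hq1 : q ≠ 1 := fun h => hqd (by omega) (by rw [h, one_pow])
    refine ⟨geometric_sub_div_sub_eq hq hq1 hq hθgeom h2 (by omega), ?_⟩
    rw [geometric_sub_div_sub_eq (inv_ne_zero hq) (inv_ne_one.mpr hq1) one_ne_zero hθsgeom h2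
      (by omega), inv_inv]
    ring

/-- The quantum q-Krawtchouk data forms a parameter array: PA3, PA4 and PA5 hold. -/
theorem quantum_qKrawtchouk_parameter_array
    {K : Type*} [Field K] [IsAlgClosed K] (hchar : ringChar K ≠ 2)
    (d : ℕ) (q r : K) (hq : q ≠ 0) (hr : r ≠ 0)
    (θ θs φ ϕ : ℕ → K)
    (hθ : ∀ i : ℕ, i ≤ d → θ i = q ^ ((i : ℤ) + 1))
    (hθs : ∀ i : ℕ, i ≤ d → θs i = q ^ (-(i : ℤ)))
    (hφ : ∀ i : ℕ, 1 ≤ i → i ≤ d →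
      φ i = -r * q ^ (1 - (i : ℤ)) * (1 - q ^ (i : ℤ)) * (1 - q ^ ((i : ℤ) - d - 1)))
    (hϕ : ∀ i : ℕ, 1 ≤ i → i ≤ d →
      ϕ i = q ^ ((d : ℤ) + 2 - 2 * i) *
        (1 - q ^ (i : ℤ)) * (1 - q ^ ((i : ℤ) - d - 1)) * (1 - r * q ^ ((i : ℤ) - d - 1)))
    (hPA1 : ∀ i j : ℕ, i < j → j ≤ d → θ i ≠ θ j ∧ θs i ≠ θs j)
    (hPA2 : ∀ i : ℕ, 1 ≤ i → i ≤ d → φ i ≠ 0 ∧ ϕ i ≠ 0) :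
    (∀ i : ℕ, 1 ≤ i → i ≤ d →
      φ i = ϕ 1 * (∑ j ∈ Finset.range i, (θ j - θ (d - j)) / (θ 0 - θ d)) +
        (θs i - θs 0) * (θ (i - 1) - θ d)) ∧
    (∀ i : ℕ, 1 ≤ i → i ≤ d →
      ϕ i = φ 1 * (∑ j ∈ Finset.range i, (θ j - θ (d - j)) / (θ 0 - θ d)) +
        (θs i - θs 0) * (θ (d - i + 1) - θ 0)) ∧
    (∃ β : K, ∀ i : ℕ, 2 ≤ i → i ≤ d - 1 →
      (θ (i - 2) - θ (i + 1)) / (θ (i - 1) - θ i) = β ∧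
      (θs (i - 2) - θs (i + 1)) / (θs (i - 1) - θs i) = β) := by
  exact quantum_qKrawtchouk_parameter_array_general d q r hq θ θs φ ϕ hθ hθs hφ hϕ
    fun hd => (hPA1 0 d hd le_rfl).1
end

section
/- (Askey–Wilson relations in the q-Racah case.) Let d be a non-negative integer and let q, s, s*, r be nonzero scalars in K. Define, for 0 ≤ i ≤ d, θ_i = s·q^{d−2i} + q^{2i−d}/s and θ*_i = s*·q^{d−2i} + q^{2i−d}/s*, and, for 1 ≤ i ≤ d, φ_i = (q^{2d+2−4i}/(s·s*·r))·(1 − q^{2i})(1 − q^{2i−2d−2})(s·s* − r·q^{2i−d−1})(s·s*·r − q^{2i−d−1}). Let (A, A*) be the associated split pair of (d+1)×(d+1) matrices. Put Q_j = q^j + q^{−j}, Q*_j = q^j − q^{−j}, S = s + 1/s, S* = s* + 1/s*, R = r + 1/r. Then (A, A*) satisfies the Askey–Wilson relations AW(Q_2, 0, 0, −(Q*_2)², −(Q*_2)², −(Q*_1)²·(S·S* + Q_{d+1}·R), Q_1·(Q*_1)²·(S·R + Q_{d+1}·S*), Q_1·(Q*_1)²·(S*·R + Q_{d+1}·S)).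 -/
/-- A pair of square matrices satisfies the Askey–Wilson relations
`AW(β, γ, γs, ρ, ρs, ω, η, ηs)`. -/
def MatSatisfiesAW {K : Type*} [Field K] {n : ℕ}
    (A As : Matrix (Fin n) (Fin n) K) (β γ γs ρ ρs ω η ηs : K) : Prop :=
  A ^ 2 * As - β • (A * As * A) + As * A ^ 2 - γ • (A * As + As * A) - ρ • As =
      γs • (A ^ 2) + ω • A + η • (1 : Matrix (Fin n) (Fin n) K) ∧
  As ^ 2 * A - β • (As * A * As) + A * As ^ 2 - γs • (As * A + A * As) - ρs • A =
      γ • (As ^ 2) + ω • As + ηs • (1 : Matrix (Fin n) (Fin n) K)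

/-- The split pair of `(d+1) × (d+1)` matrices associated with data `θ, θs, φ`:
`A` is lower bidiagonal with diagonal `θ_0, …, θ_d` and subdiagonal entries `1`;
`As` is upper bidiagonal with diagonal `θs_0, …, θs_d` and superdiagonal entries
`φ_1, …, φ_d`. -/
def splitPair {K : Type*} [Field K] {d : ℕ} (θ θs φ : ℕ → K) :
    Matrix (Fin (d + 1)) (Fin (d + 1)) K × Matrix (Fin (d + 1)) (Fin (d + 1)) K :=
  (Matrix.of fun i j => if (i : ℕ) = j then θ i else if (j : ℕ) + 1 = i then 1 else 0,
   Matrix.of fun i j => if (i : ℕ) = j then θs i else if (i : ℕ) + 1 = j then φ j else 0)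

/-!
Let `e_j` be the standard basis vectors, with `e_j = 0` for `j` outside the index range. The split
pair acts by `A e_j = θ_j e_j + x_{j+1} e_{j+1}` and `A* e_j = θ*_j e_j + φ_j e_{j-1}`, where
`x = 1` strictly between the boundary indices. Applying an Askey–Wilson relation to `e_j` and
comparing the coefficients of `e_{j+2}, …, e_{j-1}` leaves four scalar identities, which see the
off-diagonal entries only through the products `x_j φ_j = φ_j`. Transposition exchanges the roles
of `A` and `A*`, so the second relation follows from the same identities with `θ` and `θ*`
interchanged.

For the q-Racah data put `y = q^{2i-d}` and `z = y/q`. Then `θ_i = s/y + y/s`, `θ*_i = s*/y + y/s*`,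
and the four factors of `φ_i` pair up to
`φ_i = (z + 1/z - Q_{d+1}) (s s*/z + z/(s s*) - R)`. In this form `φ_i` is symmetric in `s`, `s*`,
and the four identities hold for arbitrary scalars in place of `Q_{d+1}` and `R`.
-/

section AWRelation

variable {R : Type*} [CommRing R]

/-- One of the two Askey–Wilson relations, for elements of an arbitrary algebra. The pair `(X, Y)`
satisfies `AW(β, γ, γs, ρ, ρs, ω, η, ηs)` when this holds for `X, Y` with parameters
`β, γ, γs, ρ, ω, η` and for `Y, X` with parameters `β, γs, γ, ρs, ω, ηs`. -/
def AWRelation {M : Type*} [Ring M] [Algebra R M] (X Y : M) (β γ γs ρ ω η : R) : Prop :=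
  X ^ 2 * Y - β • (X * Y * X) + Y * X ^ 2 - γ • (X * Y + Y * X) - ρ • Y =
    γs • X ^ 2 + ω • X + η • (1 : M)

variable {β γ γs ρ ω η : R}

theorem AWRelation.of_map_injective {M N : Type*} [Ring M] [Algebra R M] [Ring N] [Algebra R N]
    {g : M →ₐ[R] N} (hg : Function.Injective g) {X Y : M}
    (h : AWRelation (g X) (g Y) β γ γs ρ ω η) : AWRelation X Y β γ γs ρ ω η :=
  hg (by simpa [AWRelation] using h)

theorem AWRelation.transpose {n : Type*} [Fintype n] [DecidableEq n] {X Y : Matrix n n R}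
    (h : AWRelation X Y β γ γs ρ ω η) : AWRelation X.transpose Y.transpose β γ γs ρ ω η := by
  have ht := congrArg Matrix.transpose h
  simp only [Matrix.transpose_add, Matrix.transpose_sub, Matrix.transpose_smul,
    Matrix.transpose_mul, Matrix.transpose_pow, Matrix.transpose_one] at ht
  rw [AWRelation, ← ht, Matrix.mul_assoc, add_comm (X.transpose * Y.transpose)]
  abel

/-- The scalar form of `AWRelation` for a pair in split form with eigenvalue sequences `a`, `b` and
split sequence `f`: applied to the `j`-th vector of a split family, the relation has components
along the vectors of index `j + 2`, `j + 1`, `j` and `j - 1`, one for each field. -/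
structure SplitRecurrence (a b f : ℤ → R) (β γ γs ρ ω η : R) : Prop where
  add_two (j : ℤ) : b j - β * b (j + 1) + b (j + 2) = γs
  add_one (j : ℤ) :
    (a j + a (j + 1)) * (b j + b (j + 1)) + f j + f (j + 2) -
      β * (a j * b j + a (j + 1) * b (j + 1) + f (j + 1)) - γ * (b j + b (j + 1)) =
    γs * (a j + a (j + 1)) + ω
  diag (j : ℤ) :
    2 * a j ^ 2 * b j + (a (j - 1) + a j) * f j + (a j + a (j + 1)) * f (j + 1) -
      β * (a j * (a j * b j + f j + f (j + 1))) - γ * (2 * a j * b j + f j + f (j + 1)) -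
      ρ * b j =
    γs * a j ^ 2 + ω * a j + η
  sub_one (j : ℤ) :
    a (j - 1) ^ 2 - β * (a (j - 1) * a j) + a j ^ 2 - γ * (a (j - 1) + a j) = ρ

theorem SplitRecurrence.awRelation_of_span_eq_top {V : Type*} [AddCommGroup V] [Module R V]
    {X Y : Module.End R V} {e : ℤ → V} (he : Submodule.span R (Set.range e) = ⊤)
    {a b x y : ℤ → R} (hX : ∀ j, X (e j) = a j • e j + x (j + 1) • e (j + 1))
    (hY : ∀ j, Y (e j) = b j • e j + y j • e (j - 1))
    (h : SplitRecurrence a b (x * y) β γ γs ρ ω η) : AWRelation X Y β γ γs ρ ω η := by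
  refine LinearMap.ext_on_range he fun j => ?_
  have add_one_add_one : j + 1 + 1 = j + 2 := by ring
  have add_two_sub_one : j + 2 - 1 = j + 1 := by ring
  have h_add_one := h.add_one j
  have h_diag := h.diag j
  simp only [Pi.mul_apply] at h_add_one h_diag
  simp only [pow_two, LinearMap.add_apply, LinearMap.sub_apply, LinearMap.smul_apply,
    Module.End.mul_apply, Module.End.one_apply, hX, hY, map_add, map_smul, add_one_add_one,
    add_two_sub_one, sub_add_cancel, add_sub_cancel_right]
  linear_combination (norm := module)
    (x (j + 1) * x (j + 2)) • h.add_two j • e (j + 2) + x (j + 1) • h_add_one • e (j + 1) +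
      h_diag • e j + y j • h.sub_one j • e (j - 1)

end AWRelation

section Bidiagonal

variable {R : Type*} [Semiring R] {n : ℕ}

/-- The lower bidiagonal `n × n` matrix with diagonal `a_0, …, a_{n-1}` and subdiagonal
`x_1, …, x_{n-1}`. The sequences are indexed by `ℤ` so that recurrences for them need no side
conditions at the boundary. -/
def lowerBidiagonal (n : ℕ) (a x : ℤ → R) : Matrix (Fin n) (Fin n) R :=
  Matrix.of fun i j => if i = j then a (i : ℕ) else if (j : ℕ) + 1 = i then x (i : ℕ) else 0

/-- The `j`-th standard basis vector of `R^n` for `0 ≤ j < n`, and `0` for any other integer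
`j`. -/
def extendedBasis (R : Type*) [Semiring R] (n : ℕ) (j : ℤ) : Fin n → R :=
  fun i => if ((i : ℕ) : ℤ) = j then 1 else 0

theorem extendedBasis_coe (i : Fin n) : extendedBasis R n (i : ℕ) = Pi.single i 1 := by
  ext k
  simp [extendedBasis, Pi.single_apply, Fin.ext_iff]

theorem extendedBasis_eq_zero {j : ℤ} (hj : j < 0 ∨ n ≤ j) : extendedBasis R n j = 0 := by
  ext k
  simp only [extendedBasis, Pi.zero_apply, ite_eq_right_iff]
  omega

theorem exists_fin_coe_eq_or (n : ℕ) (j : ℤ) :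
    (∃ i : Fin n, ((i : ℕ) : ℤ) = j) ∨ j < 0 ∨ n ≤ j := by
  by_cases hj : 0 ≤ j ∧ j < n
  · exact Or.inl ⟨⟨j.toNat, by omega⟩, Int.toNat_of_nonneg hj.1⟩
  · exact Or.inr (by omega)

theorem span_range_extendedBasis : Submodule.span R (Set.range (extendedBasis R n)) = ⊤ := by
  refine top_unique ((Pi.basisFun R (Fin n)).span_eq.ge.trans (Submodule.span_mono ?_))
  rintro _ ⟨i, rfl⟩
  exact ⟨(i : ℕ), by rw [extendedBasis_coe, Pi.basisFun_apply]⟩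

theorem lowerBidiagonal_mulVec_extendedBasis (a : ℤ → R) {x : ℤ → R} (hx : x 0 = 0) (j : ℤ) :
    (lowerBidiagonal n a x).mulVec (extendedBasis R n j) =
      a j • extendedBasis R n j + x (j + 1) • extendedBasis R n (j + 1) := by
  obtain ⟨i, rfl⟩ | hj := exists_fin_coe_eq_or n j
  · rw [extendedBasis_coe, Matrix.mulVec_single_one]
    ext k
    simp only [lowerBidiagonal, extendedBasis, Matrix.col_apply, Matrix.of_apply, Pi.add_apply,
      Pi.smul_apply, Pi.single_apply, smul_eq_mul, Fin.ext_iff]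
    grind
  · rw [extendedBasis_eq_zero hj, Matrix.mulVec_zero]
    ext k
    simp only [extendedBasis, Pi.add_apply, Pi.smul_apply, Pi.zero_apply, smul_eq_mul]
    grind

theorem lowerBidiagonal_transpose_mulVec_extendedBasis (b : ℤ → R) {y : ℤ → R} (hy : y n = 0)
    (j : ℤ) :
    (lowerBidiagonal n b y).transpose.mulVec (extendedBasis R n j) =
      b j • extendedBasis R n j + y j • extendedBasis R n (j - 1) := by
  obtain ⟨i, rfl⟩ | hj := exists_fin_coe_eq_or n j
  · rw [extendedBasis_coe, Matrix.mulVec_single_one]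
    ext k
    simp only [lowerBidiagonal, extendedBasis, Matrix.col_apply, Matrix.transpose_apply,
      Matrix.of_apply, Pi.add_apply, Pi.smul_apply, Pi.single_apply, smul_eq_mul, Fin.ext_iff]
    grind
  · rw [extendedBasis_eq_zero hj, Matrix.mulVec_zero]
    ext k
    simp only [extendedBasis, Pi.add_apply, Pi.smul_apply, Pi.zero_apply, smul_eq_mul]
    grind

theorem SplitRecurrence.awRelation_lowerBidiagonal {R : Type*} [CommRing R]
    {a b x y : ℤ → R} {β γ γs ρ ω η : R} (hx : x 0 = 0) (hy : y n = 0)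
    (h : SplitRecurrence a b (x * y) β γ γs ρ ω η) :
    AWRelation (lowerBidiagonal n a x) (lowerBidiagonal n b y).transpose β γ γs ρ ω η :=
  AWRelation.of_map_injective (g := (Matrix.toLinAlgEquiv' : _ ≃ₐ[R] _).toAlgHom)
    Matrix.toLinAlgEquiv'.injective
    (h.awRelation_of_span_eq_top span_range_extendedBasis
      (lowerBidiagonal_mulVec_extendedBasis a hx)
      (lowerBidiagonal_transpose_mulVec_extendedBasis b hy))

end Bidiagonal

section SplitPair

variable {K : Type*} [Field K] {d : ℕ} {θ θs φ : ℕ → K} {a b f : ℤ → K}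

theorem splitPair_fst_eq_lowerBidiagonal {x : ℤ → K} (hθ : ∀ i : ℕ, i ≤ d → θ i = a i)
    (hx : ∀ i : ℕ, 1 ≤ i → i ≤ d → x i = 1) :
    (splitPair (d := d) θ θs φ).1 = lowerBidiagonal (d + 1) a x := by
  ext i j
  simp only [splitPair, lowerBidiagonal, Matrix.of_apply, Fin.ext_iff]
  grind

theorem splitPair_snd_eq_lowerBidiagonal_transpose (hθs : ∀ i : ℕ, i ≤ d → θs i = b i)
    (hφ : ∀ i : ℕ, 1 ≤ i → i ≤ d → φ i = f i) :
    (splitPair (d := d) θ θs φ).2 = (lowerBidiagonal (d + 1) b f).transpose := by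
  ext i j
  simp only [splitPair, lowerBidiagonal, Matrix.of_apply, Matrix.transpose_apply, Fin.ext_iff]
  grind

theorem matSatisfiesAW_splitPair {β γ γs ρ ρs ω η ηs : K} (hθ : ∀ i : ℕ, i ≤ d → θ i = a i)
    (hθs : ∀ i : ℕ, i ≤ d → θs i = b i) (hφ : ∀ i : ℕ, 1 ≤ i → i ≤ d → φ i = f i)
    (hf_zero : f 0 = 0) (hf_last : f (d + 1) = 0) (h : SplitRecurrence a b f β γ γs ρ ω η)
    (h_dual : SplitRecurrence b a f β γs γ ρs ω ηs) :
    MatSatisfiesAW (splitPair (d := d) θ θs φ).1 (splitPair (d := d) θ θs φ).2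
      β γ γs ρ ρs ω η ηs := by
  -- `A e_{-1} = 0` forces `x 0 = 0`; after transposition the same applies to `x (d + 1)`.
  let x : ℤ → K := fun i => if i = 0 ∨ i = d + 1 then 0 else 1
  have hx_mul : x * f = f := by
    ext i
    simp only [x, Pi.mul_apply]
    grind
  rw [splitPair_fst_eq_lowerBidiagonal hθ (x := x) (by grind),
    splitPair_snd_eq_lowerBidiagonal_transpose hθs hφ]
  constructor
  · rw [← hx_mul] at h
    exact h.awRelation_lowerBidiagonal (by simp [x]) (by simpa using hf_last)
  · rw [← hx_mul, mul_comm] at h_dual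
    exact (h_dual.awRelation_lowerBidiagonal hf_zero (by simp [x])).transpose

end SplitPair

section QRacah

variable {K : Type*} [Field K] {q s ss : K}

/-- The q-Racah eigenvalue `θ_i`, as a function of `y = q ^ (2i - d)`; the dual eigenvalue `θ*_i`
is the same function with `s*` in place of `s`. -/
def qRacahEigenvalue (s y : K) : K := s / y + y / s

/-- The q-Racah split parameter `φ_i`, as a function of `z = q ^ (2i - d - 1)`, where `σ = s s*`,
`c = Q_{d+1}` and `R = r + 1/r`. -/
def qRacahSplitParam (σ c R z : K) : K := (z + z⁻¹ - c) * (σ / z + z / σ - R)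

theorem qRacahEigenvalue_three_term (hq : q ≠ 0) (hs : s ≠ 0) {y : K} (hy : y ≠ 0) :
    qRacahEigenvalue s y - (q ^ (2 : ℤ) + q ^ (-2 : ℤ)) * qRacahEigenvalue s (q ^ 2 * y) +
      qRacahEigenvalue s (q ^ 4 * y) = 0 := by
  simp only [qRacahEigenvalue]
  field_simp
  ring

theorem qRacahEigenvalue_quadratic (hq : q ≠ 0) (hs : s ≠ 0) {y : K} (hy : y ≠ 0) :
    qRacahEigenvalue s y ^ 2 -
      (q ^ (2 : ℤ) + q ^ (-2 : ℤ)) * (qRacahEigenvalue s y * qRacahEigenvalue s (q ^ 2 * y)) +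
      qRacahEigenvalue s (q ^ 2 * y) ^ 2 = -(q ^ (2 : ℤ) - q ^ (-2 : ℤ)) ^ 2 := by
  simp only [qRacahEigenvalue]
  field_simp
  ring

theorem splitRecurrence_qRacah (hq : q ≠ 0) (hs : s ≠ 0) (hss : ss ≠ 0) (c R : K) {y : ℤ → K}
    (hy : ∀ j, y j ≠ 0) (hy_succ : ∀ j, y (j + 1) = q ^ 2 * y j) :
    SplitRecurrence (fun j => qRacahEigenvalue s (y j)) (fun j => qRacahEigenvalue ss (y j))
      (fun j => qRacahSplitParam (s * ss) c R (y j / q))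
      (q ^ (2 : ℤ) + q ^ (-2 : ℤ)) 0 0 (-(q ^ (2 : ℤ) - q ^ (-2 : ℤ)) ^ 2)
      (-(q - q ^ (-1 : ℤ)) ^ 2 * ((s + 1 / s) * (ss + 1 / ss) + c * R))
      ((q + q ^ (-1 : ℤ)) * (q - q ^ (-1 : ℤ)) ^ 2 *
        ((s + 1 / s) * R + c * (ss + 1 / ss))) := by
  have hy_add_two (j) : y (j + 2) = q ^ 4 * y j := by
    rw [show j + 2 = j + 1 + 1 by ring, hy_succ, hy_succ]
    ring
  have hy_pred (j) : y (j - 1) = y j / q ^ 2 := by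
    rw [eq_div_iff (pow_ne_zero 2 hq), mul_comm, ← hy_succ, sub_add_cancel]
  refine ⟨fun j => ?add_two, fun j => ?add_one, fun j => ?diag, fun j => ?sub_one⟩
  case add_two =>
    rw [hy_succ, hy_add_two]
    exact qRacahEigenvalue_three_term hq hss (hy j)
  case sub_one =>
    have hy_j : y j = q ^ 2 * y (j - 1) := by rw [← hy_succ, sub_add_cancel]
    rw [hy_j, zero_mul, sub_zero]
    exact qRacahEigenvalue_quadratic hq hs (hy (j - 1))
  all_goals
    have hyj := hy j
    simp only [qRacahEigenvalue, qRacahSplitParam, hy_succ, hy_add_two, hy_pred]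
    field_simp
    ring

theorem qRacahEigenvalue_zpow (q s : K) (d i : ℤ) :
    qRacahEigenvalue s (q ^ (2 * i - d)) = s * q ^ (d - 2 * i) + q ^ (2 * i - d) / s := by
  rw [qRacahEigenvalue, div_eq_mul_inv s, ← zpow_neg, neg_sub]

theorem qRacahSplitParam_zpow (hq : q ≠ 0) {σ r : K} (hσ : σ ≠ 0) (hr : r ≠ 0) (d i : ℤ) :
    qRacahSplitParam σ (q ^ (d + 1) + q ^ (-(d + 1))) (r + 1 / r) (q ^ (2 * i - d) / q) =
      q ^ (2 * d + 2 - 4 * i) / (σ * r) * (1 - q ^ (2 * i)) * (1 - q ^ (2 * i - 2 * d - 2)) *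
        (σ - r * q ^ (2 * i - d - 1)) * (σ * r - q ^ (2 * i - d - 1)) := by
  rw [div_eq_mul_inv (q ^ (2 * i - d)), ← zpow_sub_one₀ hq]
  set z := q ^ (2 * i - d - 1) with hz
  set E := q ^ (d + 1) with hE
  have hz0 : z ≠ 0 := zpow_ne_zero _ hq
  have hE0 : E ≠ 0 := zpow_ne_zero _ hq
  have h_inv_sq : q ^ (2 * d + 2 - 4 * i) = (z * z)⁻¹ := by
    rw [hz, ← zpow_add₀ hq, ← zpow_neg]
    ring_nf
  have h_mul : q ^ (2 * i) = z * E := by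
    rw [hz, hE, ← zpow_add₀ hq]
    ring_nf
  have h_div : q ^ (2 * i - 2 * d - 2) = z / E := by
    rw [hz, hE, ← zpow_sub₀ hq]
    ring_nf
  rw [h_inv_sq, h_mul, h_div, zpow_neg, qRacahSplitParam]
  field_simp
  ring

end QRacah

theorem qRacah_askey_wilson_general
    {K : Type*} [Field K]
    (d : ℕ) (q s ss r : K) (hq : q ≠ 0) (hs : s ≠ 0) (hss : ss ≠ 0) (hr : r ≠ 0)
    (θ θs φ : ℕ → K)
    (hθ : ∀ i : ℕ, i ≤ d → θ i = s * q ^ ((d : ℤ) - 2 * i) + q ^ (2 * (i : ℤ) - d) / s)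
    (hθs : ∀ i : ℕ, i ≤ d → θs i = ss * q ^ ((d : ℤ) - 2 * i) + q ^ (2 * (i : ℤ) - d) / ss)
    (hφ : ∀ i : ℕ, 1 ≤ i → i ≤ d →
      φ i = q ^ (2 * (d : ℤ) + 2 - 4 * i) / (s * ss * r) *
        (1 - q ^ (2 * (i : ℤ))) * (1 - q ^ (2 * (i : ℤ) - 2 * d - 2)) *
        (s * ss - r * q ^ (2 * (i : ℤ) - d - 1)) * (s * ss * r - q ^ (2 * (i : ℤ) - d - 1)))
    (Q1 Q2 Qd1 Qs1 Qs2 S Ss R : K)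
    (hQ1 : Q1 = q + q ^ (-1 : ℤ)) (hQ2 : Q2 = q ^ (2 : ℤ) + q ^ (-2 : ℤ))
    (hQd1 : Qd1 = q ^ ((d : ℤ) + 1) + q ^ (-((d : ℤ) + 1)))
    (hQs1 : Qs1 = q - q ^ (-1 : ℤ)) (hQs2 : Qs2 = q ^ (2 : ℤ) - q ^ (-2 : ℤ))
    (hS : S = s + 1 / s) (hSs : Ss = ss + 1 / ss) (hR : R = r + 1 / r) :
    MatSatisfiesAW (splitPair (d := d) θ θs φ).1 (splitPair (d := d) θ θs φ).2
      Q2 0 0 (-Qs2 ^ 2) (-Qs2 ^ 2)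
      (-Qs1 ^ 2 * (S * Ss + Qd1 * R))
      (Q1 * Qs1 ^ 2 * (S * R + Qd1 * Ss))
      (Q1 * Qs1 ^ 2 * (Ss * R + Qd1 * S)) := by
  let y : ℤ → K := fun j => q ^ (2 * j - d)
  have hy (j) : y j ≠ 0 := zpow_ne_zero _ hq
  have hy_succ (j) : y (j + 1) = q ^ 2 * y j := by
    rw [← zpow_natCast, ← zpow_add₀ hq]
    exact congrArg (q ^ ·) (by push_cast; ring)
  have hφ_eq (i : ℤ) := qRacahSplitParam_zpow hq (mul_ne_zero hs hss) hr d i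
  subst hQ1 hQ2 hQd1 hQs1 hQs2 hS hSs hR
  refine matSatisfiesAW_splitPair (fun i hi => (hθ i hi).trans (qRacahEigenvalue_zpow q s d i).symm)
    (fun i hi => (hθs i hi).trans (qRacahEigenvalue_zpow q ss d i).symm)
    (fun i h1 hi => (hφ i h1 hi).trans (hφ_eq i).symm)
    ((hφ_eq 0).trans (by simp)) ((hφ_eq (d + 1)).trans (by simp [mul_add]))
    (splitRecurrence_qRacah hq hs hss _ _ hy hy_succ) ?_
  simpa only [mul_comm ss s, mul_comm (ss + 1 / ss) (s + 1 / s)] using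
    splitRecurrence_qRacah hq hss hs _ _ hy hy_succ

/-- Askey–Wilson relations for the (alternative normalized) q-Racah split pair. -/
theorem qRacah_askey_wilson
    {K : Type*} [Field K] [IsAlgClosed K] (hchar : ringChar K ≠ 2)
    (d : ℕ) (q s ss r : K) (hq : q ≠ 0) (hs : s ≠ 0) (hss : ss ≠ 0) (hr : r ≠ 0)
    (θ θs φ : ℕ → K)
    (hθ : ∀ i : ℕ, i ≤ d → θ i = s * q ^ ((d : ℤ) - 2 * i) + q ^ (2 * (i : ℤ) - d) / s)
    (hθs : ∀ i : ℕ, i ≤ d → θs i = ss * q ^ ((d : ℤ) - 2 * i) + q ^ (2 * (i : ℤ) - d) / ss)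
    (hφ : ∀ i : ℕ, 1 ≤ i → i ≤ d →
      φ i = q ^ (2 * (d : ℤ) + 2 - 4 * i) / (s * ss * r) *
        (1 - q ^ (2 * (i : ℤ))) * (1 - q ^ (2 * (i : ℤ) - 2 * d - 2)) *
        (s * ss - r * q ^ (2 * (i : ℤ) - d - 1)) * (s * ss * r - q ^ (2 * (i : ℤ) - d - 1)))
    (Q1 Q2 Qd1 Qs1 Qs2 S Ss R : K)
    (hQ1 : Q1 = q + q ^ (-1 : ℤ)) (hQ2 : Q2 = q ^ (2 : ℤ) + q ^ (-2 : ℤ))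
    (hQd1 : Qd1 = q ^ ((d : ℤ) + 1) + q ^ (-((d : ℤ) + 1)))
    (hQs1 : Qs1 = q - q ^ (-1 : ℤ)) (hQs2 : Qs2 = q ^ (2 : ℤ) - q ^ (-2 : ℤ))
    (hS : S = s + 1 / s) (hSs : Ss = ss + 1 / ss) (hR : R = r + 1 / r) :
    MatSatisfiesAW (splitPair (d := d) θ θs φ).1 (splitPair (d := d) θ θs φ).2
      Q2 0 0 (-Qs2 ^ 2) (-Qs2 ^ 2)
      (-Qs1 ^ 2 * (S * Ss + Qd1 * R))
      (Q1 * Qs1 ^ 2 * (S * R + Qd1 * Ss))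
      (Q1 * Qs1 ^ 2 * (Ss * R + Qd1 * S)) :=
  qRacah_askey_wilson_general d q s ss r hq hs hss hr θ θs φ hθ hθs hφ Q1 Q2 Qd1 Qs1 Qs2 S Ss R
    hQ1 hQ2 hQd1 hQs1 hQs2 hS hSs hR
end

section
/- (Askey–Wilson relations in the dual q-Krawtchouk case.) Let d be a non-negative integer and let q, s be nonzero scalars in K. Define, for 0 ≤ i ≤ d, θ_i = q^{−i} + s·q^{i+1} and θ*_i = q^{−i}, and, for 1 ≤ i ≤ d, φ_i = q^{1−2i}·(1 − q^i)(1 − q^{i−d−1}). Let (A, A*) be the associated split pair of (d+1)×(d+1) matrices. Put S = s·q^{d+1} + 1, Q = q^{d+1} + 1, C = −(q² − 1)²/q, C* = (q − 1)²/q^{d+1}. Then (A, A*) satisfies the Askey–Wilson relations AW(q + q^{−1}, 0, 0, s·C, 0, −C*·S, (q + 1)·C*·s·Q, 0). -/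
/-!
Write `[x, y]_q = x y - q y x`. The cubic parts of the two Askey–Wilson relations are
`[A, [A, A*]_q]_{q⁻¹}` and `[[A, A*]_q, A*]_{q⁻¹}`. With `k = diag(q⁻ⁱ)` we have
`A = k + s q k⁻¹ + n` and `A* = k + r`, where `n`, `r` `q`-commute with `k` and, because the formula
for `φ` vanishes at `0` and `d + 1`, both `n r` and `r n` are quadratic polynomials in `k`. Hence
`[A, A*]_q` is a linear combination of `1` and `k⁻¹ r`, and the outer `q⁻¹`-commutators can be read
off: `[A, k⁻¹ r]_{q⁻¹}` is a combination of `A*` and `1`, and `[k⁻¹ r, A*]_{q⁻¹} = 0`.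
-/

section QCommutator

variable {K R : Type*} [CommRing K] [Ring R] [Algebra K R]

/-- The `q`-commutator `[x, y]_q = x y - q y x`, from which the cubic parts of the Askey–Wilson
relations are assembled. -/
def qCommutator (q : K) (x y : R) : R := x * y - q • (y * x)

theorem qCommutator_add_left (q : K) (x y z : R) :
    qCommutator q (x + y) z = qCommutator q x z + qCommutator q y z := by
  simp only [qCommutator, add_mul, mul_add]
  module

theorem qCommutator_add_right (q : K) (x y z : R) :
    qCommutator q x (y + z) = qCommutator q x y + qCommutator q x z := by
  simp only [qCommutator, add_mul, mul_add]
  module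

theorem qCommutator_smul_left (q c : K) (x y : R) :
    qCommutator q (c • x) y = c • qCommutator q x y := by
  simp only [qCommutator, smul_mul_assoc, mul_smul_comm]
  module

theorem qCommutator_smul_right (q c : K) (x y : R) :
    qCommutator q x (c • y) = c • qCommutator q x y := by
  simp only [qCommutator, smul_mul_assoc, mul_smul_comm]
  module

theorem qCommutator_one_left (q : K) (x : R) : qCommutator q 1 x = (1 - q) • x := by
  simp only [qCommutator, one_mul, mul_one]
  module

theorem qCommutator_one_right (q : K) (x : R) : qCommutator q x 1 = (1 - q) • x := by
  simp only [qCommutator, one_mul, mul_one]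
  module

end QCommutator

theorem qCommutator_inv_qCommutator_right {K R : Type*} [Field K] [Ring R] [Algebra K R]
    {q : K} (hq : q ≠ 0) (a b : R) :
    qCommutator q⁻¹ a (qCommutator q a b) =
      a ^ 2 * b - (q + q⁻¹) • (a * b * a) + b * a ^ 2 := by
  simp only [qCommutator, mul_sub, sub_mul, smul_mul_assoc, mul_smul_comm, pow_two, mul_assoc]
  match_scalars <;> field_simp
  ring

theorem qCommutator_inv_qCommutator_left {K R : Type*} [Field K] [Ring R] [Algebra K R]
    {q : K} (hq : q ≠ 0) (a b : R) :
    qCommutator q⁻¹ (qCommutator q a b) b =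
      b ^ 2 * a - (q + q⁻¹) • (b * a * b) + a * b ^ 2 := by
  simp only [qCommutator, mul_sub, sub_mul, smul_mul_assoc, mul_smul_comm, pow_two, mul_assoc]
  match_scalars <;> field_simp
  ring

theorem matSatisfiesAW_of_qCommutator {K : Type*} [Field K] {m : ℕ} {q : K} (hq : q ≠ 0)
    {A B X : Matrix (Fin m) (Fin m) K} {α δ κ μ : K}
    (hAB : qCommutator q A B = α • 1 + δ • X)
    (hAX : qCommutator q⁻¹ A X = κ • B + μ • 1)
    (hXB : qCommutator q⁻¹ X B = 0) :
    MatSatisfiesAW A B (q + q⁻¹) 0 0 (δ * κ) 0 ((1 - q⁻¹) * α) (δ * μ) 0 := by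
  constructor
  · rw [← qCommutator_inv_qCommutator_right hq, hAB, qCommutator_add_right,
      qCommutator_smul_right, qCommutator_smul_right, qCommutator_one_right, hAX]
    module
  · rw [← qCommutator_inv_qCommutator_left hq, hAB, qCommutator_add_left,
      qCommutator_smul_left, qCommutator_smul_left, qCommutator_one_left, hXB]
    module

/-- The relations between the constituents of the dual `q`-Krawtchouk split pair, in an arbitrary
algebra: `k` and `kinv` stand for `diag(q⁻ⁱ)` and its inverse, `n` for the subdiagonal part of `A`,
`r` for the superdiagonal part of `A*`, and `p` for `q^{-(d+1)}`. The polynomial in `n_mul_r` is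
`φ_i`, and the one in `r_mul_n` is `φ_{i+1}`, both written in terms of `q⁻ⁱ`. -/
structure IsDualQKrawtchoukSystem {K R : Type*} [Field K] [Ring R] [Algebra K R]
    (q p : K) (k kinv n r : R) : Prop where
  k_mul_kinv : k * kinv = 1
  kinv_mul_k : kinv * k = 1
  n_mul_k : n * k = q • (k * n)
  k_mul_r : k * r = q • (r * k)
  n_mul_r : n * r = q • (k ^ 2 - (1 + p) • k + p • 1)
  r_mul_n : r * n = q • ((q⁻¹ • k) ^ 2 - (1 + p) • (q⁻¹ • k) + p • 1)

namespace IsDualQKrawtchoukSystem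

variable {K R : Type*} [Field K] [Ring R] [Algebra K R] {q p : K} {k kinv n r : R}

theorem r_mul_k (h : IsDualQKrawtchoukSystem q p k kinv n r) (hq : q ≠ 0) :
    r * k = q⁻¹ • (k * r) := by
  rw [h.k_mul_r, inv_smul_smul₀ hq]

theorem r_mul_kinv (h : IsDualQKrawtchoukSystem q p k kinv n r) :
    r * kinv = q • (kinv * r) :=
  calc r * kinv = kinv * (k * r) * kinv := by rw [← mul_assoc, h.kinv_mul_k, one_mul]
    _ = q • (kinv * r * (k * kinv)) := by
      rw [h.k_mul_r]
      simp only [mul_smul_comm, smul_mul_assoc, mul_assoc]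
    _ = q • (kinv * r) := by rw [h.k_mul_kinv, mul_one]

theorem n_mul_kinv (h : IsDualQKrawtchoukSystem q p k kinv n r) (hq : q ≠ 0) :
    n * kinv = q⁻¹ • (kinv * n) := by
  rw [eq_inv_smul_iff₀ hq]
  calc q • (n * kinv) = kinv * (q • (k * n)) * kinv := by
        simp only [mul_smul_comm, smul_mul_assoc, ← mul_assoc, h.kinv_mul_k, one_mul]
    _ = kinv * n := by rw [← h.n_mul_k, mul_assoc, mul_assoc, h.k_mul_kinv, mul_one]

theorem qCommutator_n_r (h : IsDualQKrawtchoukSystem q p k kinv n r) (hq : q ≠ 0) :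
    qCommutator q n r = (q - 1) • (k ^ 2 - (q * p) • 1) := by
  rw [qCommutator, h.n_mul_r, h.r_mul_n, smul_pow]
  match_scalars <;> field_simp <;> ring

theorem qCommutator_lower_upper (h : IsDualQKrawtchoukSystem q p k kinv n r) (hq : q ≠ 0)
    (t : K) :
    qCommutator q (k + t • kinv + n) (k + r) =
      ((1 - q) * (t + q * p)) • 1 + (t * (1 - q ^ 2)) • (kinv * r) := by
  have k_k : qCommutator q k k = (1 - q) • k ^ 2 := by rw [qCommutator, ← pow_two]; module
  have kinv_k : qCommutator q kinv k = (1 - q) • 1 := by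
    rw [qCommutator, h.kinv_mul_k, h.k_mul_kinv]; module
  have n_k : qCommutator q n k = 0 := by rw [qCommutator, h.n_mul_k, sub_self]
  have k_r : qCommutator q k r = 0 := by rw [qCommutator, h.k_mul_r, sub_self]
  have kinv_r : qCommutator q kinv r = (1 - q ^ 2) • (kinv * r) := by
    rw [qCommutator, h.r_mul_kinv]; module
  simp only [qCommutator_add_left, qCommutator_add_right, qCommutator_smul_left, k_k, kinv_k, n_k,
    k_r, kinv_r, h.qCommutator_n_r hq]
  module

theorem qCommutator_lower_kinv_mul_r (h : IsDualQKrawtchoukSystem q p k kinv n r) (hq : q ≠ 0)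
    (t : K) :
    qCommutator q⁻¹ (k + t • kinv + n) (kinv * r) =
      (1 - q⁻¹ ^ 2) • (k + r) + (-(1 - q⁻¹) * (1 + p)) • 1 := by
  have k_x : qCommutator q⁻¹ k (kinv * r) = (1 - q⁻¹ ^ 2) • r := by
    rw [qCommutator, mul_assoc kinv, h.r_mul_k hq, mul_smul_comm, ← mul_assoc, ← mul_assoc,
      h.k_mul_kinv, h.kinv_mul_k, one_mul]
    module
  have kinv_x : qCommutator q⁻¹ kinv (kinv * r) = 0 := by
    rw [qCommutator, mul_assoc kinv r, h.r_mul_kinv, mul_smul_comm, inv_smul_smul₀ hq, sub_self]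
  have n_x : qCommutator q⁻¹ n (kinv * r) = (1 - q⁻¹ ^ 2) • k + (-(1 - q⁻¹) * (1 + p)) • 1 :=
    calc qCommutator q⁻¹ n (kinv * r) = q⁻¹ • (kinv * (n * r - r * n)) := by
          rw [qCommutator, ← mul_assoc, h.n_mul_kinv hq, smul_mul_assoc, mul_assoc, mul_assoc,
            mul_sub, smul_sub]
      _ = q⁻¹ • (kinv * (k * ((q - q⁻¹) • k - ((q - 1) * (1 + p)) • 1))) := by
          congr 2
          rw [h.n_mul_r, h.r_mul_n, smul_pow, mul_sub, mul_smul_comm, mul_smul_comm, mul_one,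
            ← pow_two]
          match_scalars <;> field_simp <;> ring
      _ = (1 - q⁻¹ ^ 2) • k + (-(1 - q⁻¹) * (1 + p)) • 1 := by
          rw [← mul_assoc, h.kinv_mul_k, one_mul]
          match_scalars <;> field_simp
  simp only [qCommutator_add_left, qCommutator_smul_left, k_x, kinv_x, n_x]
  module

theorem qCommutator_kinv_mul_r_upper (h : IsDualQKrawtchoukSystem q p k kinv n r) (hq : q ≠ 0) :
    qCommutator q⁻¹ (kinv * r) (k + r) = 0 := by
  have x_k : qCommutator q⁻¹ (kinv * r) k = 0 := by
    rw [qCommutator, mul_assoc, h.r_mul_k hq, mul_smul_comm, ← mul_assoc, ← mul_assoc,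
      h.kinv_mul_k, h.k_mul_kinv, sub_self]
  have x_r : qCommutator q⁻¹ (kinv * r) r = 0 := by
    rw [qCommutator, ← mul_assoc r, h.r_mul_kinv, smul_mul_assoc, inv_smul_smul₀ hq, sub_self]
  rw [qCommutator_add_right, x_k, x_r, add_zero]

end IsDualQKrawtchoukSystem

theorem IsDualQKrawtchoukSystem.matSatisfiesAW {K : Type*} [Field K] {m : ℕ} {q p : K}
    {k kinv n r : Matrix (Fin m) (Fin m) K} (h : IsDualQKrawtchoukSystem q p k kinv n r)
    (hq : q ≠ 0) (t : K) :
    MatSatisfiesAW (k + t • kinv + n) (k + r) (q + q⁻¹) 0 0 (t * (1 - q ^ 2) * (1 - q⁻¹ ^ 2)) 0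
      ((1 - q⁻¹) * ((1 - q) * (t + q * p))) (t * (1 - q ^ 2) * (-(1 - q⁻¹) * (1 + p))) 0 :=
  matSatisfiesAW_of_qCommutator hq (h.qCommutator_lower_upper hq t)
    (h.qCommutator_lower_kinv_mul_r hq t) (h.qCommutator_kinv_mul_r_upper hq)

/-- The second split sequence `φ` of the dual `q`-Krawtchouk pair, as a quadratic polynomial in
`q⁻ⁱ`, so that its zeros at `i = 0` and `i = d + 1` are visible. -/
def dualQKrawtchoukPhi {K : Type*} [Field K] (q : K) (d i : ℕ) : K :=
  q * (1 - q⁻¹ ^ i) * (q⁻¹ ^ (d + 1) - q⁻¹ ^ i)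

theorem dualQKrawtchoukPhi_eq_zpow {K : Type*} [Field K] {q : K} (hq : q ≠ 0) (d i : ℕ) :
    dualQKrawtchoukPhi q d i =
      q ^ (1 - 2 * (i : ℤ)) * (1 - q ^ (i : ℤ)) * (1 - q ^ ((i : ℤ) - d - 1)) := by
  have hsq : q ^ (1 - 2 * (i : ℤ)) = q / (q ^ i) ^ 2 := by
    rw [zpow_sub₀ hq, zpow_one, mul_comm, zpow_mul, zpow_natCast, zpow_ofNat]
  have hquot : q ^ ((i : ℤ) - d - 1) = q ^ i / q ^ (d + 1) := by
    rw [sub_sub, zpow_sub₀ hq, zpow_natCast, ← Nat.cast_succ, zpow_natCast]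
  rw [hsq, hquot, zpow_natCast, dualQKrawtchoukPhi, inv_pow, inv_pow]
  field_simp
  ring

section LowerShift

open Matrix

/-- The matrix with ones on the subdiagonal and zeros elsewhere; multiplied by diagonal matrices,
it and its transpose give the off-diagonal parts of a split pair. -/
def lowerShift (R : Type*) [Zero R] [One R] (m : ℕ) : Matrix (Fin m) (Fin m) R :=
  of fun i j => if (j : ℕ) + 1 = i then 1 else 0

theorem lowerShift_apply {R : Type*} [Zero R] [One R] {m : ℕ} (i j : Fin m) :
    lowerShift R m i j = if (j : ℕ) + 1 = i then 1 else 0 := rfl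

variable {R : Type*} [Semiring R] {m : ℕ}

theorem lowerShift_mul_diagonal_succ (f : ℕ → R) :
    lowerShift R m * diagonal (fun i : Fin m => f (i + 1)) =
      diagonal (fun i : Fin m => f i) * lowerShift R m := by
  ext i j
  rw [mul_diagonal, diagonal_mul, lowerShift_apply]
  split_ifs with hij
  · rw [hij, one_mul, mul_one]
  · rw [zero_mul, mul_zero]

theorem diagonal_succ_mul_lowerShift_transpose (f : ℕ → R) :
    diagonal (fun i : Fin m => f (i + 1)) * (lowerShift R m)ᵀ =
      (lowerShift R m)ᵀ * diagonal (fun i : Fin m => f i) := by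
  ext i j
  rw [mul_diagonal, diagonal_mul, transpose_apply, lowerShift_apply]
  split_ifs with hij
  · rw [hij, one_mul, mul_one]
  · rw [zero_mul, mul_zero]

theorem lowerShift_mul_transpose_mul_diagonal {f : ℕ → R} (hf : f 0 = 0) :
    lowerShift R m * ((lowerShift R m)ᵀ * diagonal (fun i : Fin m => f i)) =
      diagonal (fun i : Fin m => f i) := by
  ext ⟨i, hi⟩ j
  simp only [Matrix.mul_apply (M := lowerShift R m), mul_diagonal, transpose_apply,
    lowerShift_apply, ite_mul, one_mul, zero_mul]
  rcases i with _ | i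
  · simp [diagonal_apply, hf]
  · rw [Finset.sum_eq_single ⟨i, by lia⟩ (by grind) (by simp), diagonal_apply]
    grind

theorem lowerShift_transpose_mul_diagonal_mul {f : ℕ → R} (hf : f m = 0) :
    (lowerShift R m)ᵀ * diagonal (fun i : Fin m => f i) * lowerShift R m =
      diagonal (fun i : Fin m => f (i + 1)) := by
  ext i j
  simp only [Matrix.mul_apply (N := lowerShift R m), mul_diagonal, transpose_apply,
    lowerShift_apply, ite_mul, one_mul, zero_mul]
  rcases (Nat.succ_le_of_lt i.isLt).lt_or_eq with hi | hi
  · rw [Finset.sum_eq_single ⟨i + 1, hi⟩ (by grind) (by simp), diagonal_apply]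
    grind
  · have hfi : f (i + 1) = 0 := by simpa only [← hi] using hf
    rw [diagonal_apply, hfi, ite_self]
    exact Finset.sum_eq_zero fun k _ => by grind

end LowerShift

section SplitPair

open Matrix

variable {K : Type*} [Field K] {d : ℕ}

theorem splitPair_fst (θ θs φ : ℕ → K) :
    (splitPair (d := d) θ θs φ).1 =
      diagonal (fun i : Fin (d + 1) => θ i) + lowerShift K (d + 1) := by
  ext i j
  simp only [splitPair, lowerShift_apply, of_apply, Matrix.add_apply, diagonal_apply, Fin.ext_iff]
  grind

theorem splitPair_snd (θ θs φ : ℕ → K) :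
    (splitPair (d := d) θ θs φ).2 = diagonal (fun i : Fin (d + 1) => θs i) +
      (lowerShift K (d + 1))ᵀ * diagonal (fun i : Fin (d + 1) => φ i) := by
  ext i j
  simp only [splitPair, lowerShift_apply, of_apply, Matrix.add_apply, diagonal_apply, mul_diagonal,
    transpose_apply, Fin.ext_iff]
  grind

theorem splitPair_congr {θ θ' θs θs' φ φ' : ℕ → K} (hθ : ∀ i ≤ d, θ i = θ' i)
    (hθs : ∀ i ≤ d, θs i = θs' i) (hφ : ∀ i, 1 ≤ i → i ≤ d → φ i = φ' i) :
    splitPair (d := d) θ θs φ = splitPair θ' θs' φ' := by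
  ext i j <;> simp only [splitPair, of_apply] <;> grind

theorem isDualQKrawtchoukSystem_diagonal_lowerShift {q : K} (hq : q ≠ 0) (d : ℕ) :
    IsDualQKrawtchoukSystem q (q⁻¹ ^ (d + 1))
      (diagonal fun i : Fin (d + 1) => q⁻¹ ^ (i : ℕ)) (diagonal fun i : Fin (d + 1) => q ^ (i : ℕ))
      (lowerShift K (d + 1))
      ((lowerShift K (d + 1))ᵀ * diagonal fun i : Fin (d + 1) => dualQKrawtchoukPhi q d i) where
  k_mul_kinv := by simp [hq]
  kinv_mul_k := by simp [hq]
  n_mul_k := by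
    rw [← lowerShift_mul_diagonal_succ (fun i => q⁻¹ ^ i), ← mul_smul_comm, ← diagonal_smul]
    congr! with i
    simp [pow_succ', hq]
  k_mul_r := by
    rw [mul_assoc, (commute_diagonal _ _).eq, ← mul_assoc, ← mul_assoc,
      ← diagonal_succ_mul_lowerShift_transpose (fun i => q⁻¹ ^ i), ← smul_mul_assoc,
      ← smul_mul_assoc, ← diagonal_smul]
    congr! with i
    simp [pow_succ', hq]
  n_mul_r := by
    rw [lowerShift_mul_transpose_mul_diagonal (by simp [dualQKrawtchoukPhi])]
    simp only [diagonal_pow, ← diagonal_one, ← diagonal_smul, diagonal_sub, diagonal_add]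
    congr! with i
    simp only [dualQKrawtchoukPhi, inv_pow, Pi.pow_apply, Pi.smul_apply, smul_eq_mul, mul_one]
    ring
  r_mul_n := by
    rw [lowerShift_transpose_mul_diagonal_mul (by simp [dualQKrawtchoukPhi])]
    simp only [diagonal_pow, ← diagonal_one, ← diagonal_smul, diagonal_sub, diagonal_add]
    congr! with i
    simp only [dualQKrawtchoukPhi, inv_pow, Pi.pow_apply, Pi.smul_apply, smul_eq_mul, mul_one]
    ring

theorem splitPair_dualQKrawtchouk {q : K} (hq : q ≠ 0) (s : K) {θ θs φ : ℕ → K}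
    (hθ : ∀ i : ℕ, i ≤ d → θ i = q ^ (-(i : ℤ)) + s * q ^ ((i : ℤ) + 1))
    (hθs : ∀ i : ℕ, i ≤ d → θs i = q ^ (-(i : ℤ)))
    (hφ : ∀ i : ℕ, 1 ≤ i → i ≤ d →
      φ i = q ^ (1 - 2 * (i : ℤ)) * (1 - q ^ (i : ℤ)) * (1 - q ^ ((i : ℤ) - d - 1))) :
    splitPair (d := d) θ θs φ =
      ((diagonal fun i : Fin (d + 1) => q⁻¹ ^ (i : ℕ)) +
          (s * q) • (diagonal fun i : Fin (d + 1) => q ^ (i : ℕ)) + lowerShift K (d + 1),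
        (diagonal fun i : Fin (d + 1) => q⁻¹ ^ (i : ℕ)) +
          (lowerShift K (d + 1))ᵀ * diagonal fun i : Fin (d + 1) => dualQKrawtchoukPhi q d i) := by
  have zpow_neg_natCast (i : ℕ) : q ^ (-(i : ℤ)) = q⁻¹ ^ i := by simp
  rw [splitPair_congr (θ' := fun i => q⁻¹ ^ i + s * q * q ^ i) (θs' := fun i => q⁻¹ ^ i)
    (φ' := dualQKrawtchoukPhi q d)
    (fun i hi => by rw [hθ i hi, zpow_neg_natCast, zpow_add₀ hq, zpow_natCast, zpow_one]; ring)
    (fun i hi => by rw [hθs i hi, zpow_neg_natCast])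
    (fun i hi hid => by rw [hφ i hi hid, dualQKrawtchoukPhi_eq_zpow hq])]
  ext1
  · rw [splitPair_fst, ← diagonal_smul, diagonal_add]
    rfl
  · rw [splitPair_snd]

end SplitPair

theorem dual_qKrawtchouk_askey_wilson_general
    {K : Type*} [Field K]
    (d : ℕ) (q s : K) (hq : q ≠ 0)
    (θ θs φ : ℕ → K)
    (hθ : ∀ i : ℕ, i ≤ d → θ i = q ^ (-(i : ℤ)) + s * q ^ ((i : ℤ) + 1))
    (hθs : ∀ i : ℕ, i ≤ d → θs i = q ^ (-(i : ℤ)))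
    (hφ : ∀ i : ℕ, 1 ≤ i → i ≤ d →
      φ i = q ^ (1 - 2 * (i : ℤ)) * (1 - q ^ (i : ℤ)) * (1 - q ^ ((i : ℤ) - d - 1)))
    (S Q C Cs : K)
    (hS : S = s * q ^ (d + 1) + 1) (hQ : Q = q ^ (d + 1) + 1)
    (hC : C = -(q ^ 2 - 1) ^ 2 / q) (hCs : Cs = (q - 1) ^ 2 / q ^ (d + 1)) :
    MatSatisfiesAW (splitPair (d := d) θ θs φ).1 (splitPair (d := d) θ θs φ).2
      (q + q ^ (-1 : ℤ)) 0 0 (s * C) 0 (-Cs * S) ((q + 1) * Cs * s * Q) 0 := by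
  rw [splitPair_dualQKrawtchouk hq s hθ hθs hφ]
  convert (isDualQKrawtchoukSystem_diagonal_lowerShift hq d).matSatisfiesAW hq (s * q) using 1
  · rw [zpow_neg_one]
  · rw [hC]
    field_simp
    ring
  · rw [hCs, hS, inv_pow]
    field_simp
    ring
  · rw [hCs, hQ, inv_pow]
    field_simp
    ring

/-- Askey–Wilson relations for the normalized dual q-Krawtchouk split pair. -/
theorem dual_qKrawtchouk_askey_wilson
    {K : Type*} [Field K] [IsAlgClosed K] (hchar : ringChar K ≠ 2)
    (d : ℕ) (q s : K) (hq : q ≠ 0) (hs : s ≠ 0)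
    (θ θs φ : ℕ → K)
    (hθ : ∀ i : ℕ, i ≤ d → θ i = q ^ (-(i : ℤ)) + s * q ^ ((i : ℤ) + 1))
    (hθs : ∀ i : ℕ, i ≤ d → θs i = q ^ (-(i : ℤ)))
    (hφ : ∀ i : ℕ, 1 ≤ i → i ≤ d →
      φ i = q ^ (1 - 2 * (i : ℤ)) * (1 - q ^ (i : ℤ)) * (1 - q ^ ((i : ℤ) - d - 1)))
    (S Q C Cs : K)
    (hS : S = s * q ^ (d + 1) + 1) (hQ : Q = q ^ (d + 1) + 1)
    (hC : C = -(q ^ 2 - 1) ^ 2 / q) (hCs : Cs = (q - 1) ^ 2 / q ^ (d + 1)) :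
    MatSatisfiesAW (splitPair (d := d) θ θs φ).1 (splitPair (d := d) θ θs φ).2
      (q + q ^ (-1 : ℤ)) 0 0 (s * C) 0 (-Cs * S) ((q + 1) * Cs * s * Q) 0 :=
  dual_qKrawtchouk_askey_wilson_general d q s hq θ θs φ hθ hθs hφ S Q C Cs hS hQ hC hCs
end

section
/- (Racah parameter array.) Let d be a non-negative integer and let u, u*, v be scalars in K; for an integer n, n also denotes the element n·1 of K. Define, for 0 ≤ i ≤ d, θ_i = (i + u)(i + u + 1) and θ*_i = (i + u*)(i + u* + 1), and, for 1 ≤ i ≤ d, φ_i = i·(i − d − 1)·(i + u + u* − v)·(i + u + u* + d + 1 + v) and ϕ_i = i·(i − d − 1)·(i − u + u* + v)·(i − u + u* − d − 1 − v). Assume θ_i ≠ θ_j and θ*_i ≠ θ*_j for 0 ≤ i < j ≤ d, and φ_i ≠ 0 and ϕ_i ≠ 0 for 1 ≤ i ≤ d. Then (θ_0,…,θ_d; θ*_0,…,θ*_d; φ_1,…,φ_d; ϕ_1,…,ϕ_d) is a parameter array over K of diameter d, i.e., conditions PA3, PA4 and PA5 also hold. -/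
/-!
The quotient `(θ j - θ (d - j)) / (θ 0 - θ d)` equals `(d - 2 * j) / d`, so the sums in PA3 and PA4
are the quadratics `i * (d - i + 1) / d`, and PA3 becomes a polynomial identity in `i`.
The substitution `u ↦ -u - d - 1` reverses the sequence `θ` and interchanges `φ` and `ϕ`, hence it
carries PA3 to PA4. In PA5 the common value is `3`, because `θ` and `θs` are quadratic in `i`.
-/

section CommRing

variable {R : Type*} [CommRing R]

/-- The Racah eigenvalue `(x + u) * (x + u + 1)`: `θ i` at parameter `u` and `θs i` at parameter
`us`. The index `x` ranges over the ring, so that identities in `i` become polynomial identities. -/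
def racahEigenvalue (u x : R) : R :=
  (x + u) * (x + u + 1)

/-- The Racah first split sequence `φ`, with the index `x` and the diameter `d` ring elements. -/
def racahFirstSplit (d u us v x : R) : R :=
  x * (x - d - 1) * (x + u + us - v) * (x + u + us + d + 1 + v)

/-- The Racah second split sequence `ϕ`, with the index `x` and the diameter `d` ring elements. -/
def racahSecondSplit (d u us v x : R) : R :=
  x * (x - d - 1) * (x - u + us + v) * (x - u + us - d - 1 - v)

theorem racahEigenvalue_sub (u x y : R) :
    racahEigenvalue u x - racahEigenvalue u y = (x - y) * (x + y + 2 * u + 1) := by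
  unfold racahEigenvalue
  ring

theorem racahEigenvalue_reflect (d u x : R) :
    racahEigenvalue (-u - d - 1) x = racahEigenvalue u (d - x) := by
  unfold racahEigenvalue
  ring

theorem racahFirstSplit_reflect (d u us v x : R) :
    racahFirstSplit d (-u - d - 1) us v x = racahSecondSplit d u us v x := by
  unfold racahFirstSplit racahSecondSplit
  ring

theorem racahSecondSplit_reflect (d u us v x : R) :
    racahSecondSplit d (-u - d - 1) us v x = racahFirstSplit d u us v x := by
  unfold racahFirstSplit racahSecondSplit
  ring

theorem racahEigenvalue_sub_eq_three_mul (u x : R) :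
    racahEigenvalue u (x - 2) - racahEigenvalue u (x + 1) =
      3 * (racahEigenvalue u (x - 1) - racahEigenvalue u x) := by
  simp only [racahEigenvalue_sub]
  ring

theorem sum_range_sub_two_mul (d : R) (n : ℕ) :
    ∑ j ∈ Finset.range n, (d - 2 * (j : R)) = n * (d - n + 1) := by
  induction n with
  | zero => simp
  | succ n ih =>
    rw [Finset.sum_range_succ, ih]
    push_cast
    ring

end CommRing

section Field

variable {K : Type*} [Field K]

theorem ne_zero_of_racahEigenvalue_ne {d u : K}
    (h : racahEigenvalue u 0 ≠ racahEigenvalue u d) : d ≠ 0 := by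
  rintro rfl
  exact h rfl

theorem racahEigenvalue_sub_reflect_div {d u : K}
    (h : racahEigenvalue u 0 ≠ racahEigenvalue u d) (x : K) :
    (racahEigenvalue u x - racahEigenvalue u (d - x)) /
      (racahEigenvalue u 0 - racahEigenvalue u d) = (d - 2 * x) / d := by
  rw [div_eq_div_iff (sub_ne_zero.mpr h) (ne_zero_of_racahEigenvalue_ne h)]
  simp only [racahEigenvalue_sub]
  ring

theorem sum_racahEigenvalue_sub_reflect_div {d u : K}
    (h : racahEigenvalue u 0 ≠ racahEigenvalue u d) (n : ℕ) :
    ∑ j ∈ Finset.range n, (racahEigenvalue u j - racahEigenvalue u (d - j)) /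
      (racahEigenvalue u 0 - racahEigenvalue u d) = n * (d - n + 1) / d := by
  simp only [racahEigenvalue_sub_reflect_div h]
  rw [← Finset.sum_div, sum_range_sub_two_mul]

theorem racahFirstSplit_eq {d : K} (hd : d ≠ 0) (u us v x : K) :
    racahFirstSplit d u us v x =
      racahSecondSplit d u us v 1 * (x * (d - x + 1) / d) +
        (racahEigenvalue us x - racahEigenvalue us 0) *
          (racahEigenvalue u (x - 1) - racahEigenvalue u d) := by
  simp only [racahEigenvalue_sub, racahFirstSplit, racahSecondSplit]
  field_simp
  ring

theorem racahSecondSplit_eq {d : K} (hd : d ≠ 0) (u us v x : K) :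
    racahSecondSplit d u us v x =
      racahFirstSplit d u us v 1 * (x * (d - x + 1) / d) +
        (racahEigenvalue us x - racahEigenvalue us 0) *
          (racahEigenvalue u (d - x + 1) - racahEigenvalue u 0) := by
  have h := racahFirstSplit_eq hd (-u - d - 1) us v x
  simpa only [racahFirstSplit_reflect, racahSecondSplit_reflect, racahEigenvalue_reflect, sub_self,
    sub_sub_eq_add_sub, add_sub_right_comm] using h

section Sequence

variable {d : ℕ} {u : K} {θ : ℕ → K}

theorem sum_sub_reflect_div_of_eq_racahEigenvalue
    (hθ : ∀ i : ℕ, i ≤ d → θ i = racahEigenvalue u i) (h : θ 0 ≠ θ d) {n : ℕ} (hn : n ≤ d) :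
    ∑ j ∈ Finset.range n, (θ j - θ (d - j)) / (θ 0 - θ d) = n * ((d : K) - n + 1) / d := by
  have h0 : θ 0 = racahEigenvalue u 0 := by simpa using hθ 0 d.zero_le
  rw [h0, hθ d le_rfl] at h ⊢
  rw [← sum_racahEigenvalue_sub_reflect_div h]
  refine Finset.sum_congr rfl fun j hj => ?_
  have hjd : j ≤ d := (Finset.mem_range.mp hj).le.trans hn
  rw [hθ j hjd, hθ (d - j) (d.sub_le j), Nat.cast_sub hjd]

theorem sub_div_sub_eq_three_of_eq_racahEigenvalue
    (hθ : ∀ i : ℕ, i ≤ d → θ i = racahEigenvalue u i) {i : ℕ} (h2 : 2 ≤ i) (hi : i ≤ d - 1)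
    (h : θ (i - 1) ≠ θ i) : (θ (i - 2) - θ (i + 1)) / (θ (i - 1) - θ i) = 3 := by
  rw [div_eq_iff (sub_ne_zero.mpr h), hθ (i - 2) (by lia), hθ (i + 1) (by lia),
    hθ (i - 1) (by lia), hθ i (by lia), Nat.cast_sub h2, Nat.cast_sub (by lia : 1 ≤ i)]
  simpa using racahEigenvalue_sub_eq_three_mul u (i : K)

end Sequence

end Field

theorem racah_parameter_array_general
    {K : Type*} [Field K] (d : ℕ) (u us v : K)
    (θ θs φ ϕ : ℕ → K)
    (hθ : ∀ i : ℕ, i ≤ d → θ i = racahEigenvalue u i)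
    (hθs : ∀ i : ℕ, i ≤ d → θs i = racahEigenvalue us i)
    (hφ : ∀ i : ℕ, 1 ≤ i → i ≤ d → φ i = racahFirstSplit (d : K) u us v i)
    (hϕ : ∀ i : ℕ, 1 ≤ i → i ≤ d → ϕ i = racahSecondSplit (d : K) u us v i)
    (hPA1 : ∀ i j : ℕ, i < j → j ≤ d → θ i ≠ θ j ∧ θs i ≠ θs j) :
    (∀ i : ℕ, 1 ≤ i → i ≤ d →
      φ i = ϕ 1 * (∑ j ∈ Finset.range i, (θ j - θ (d - j)) / (θ 0 - θ d)) +
        (θs i - θs 0) * (θ (i - 1) - θ d)) ∧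
    (∀ i : ℕ, 1 ≤ i → i ≤ d →
      ϕ i = φ 1 * (∑ j ∈ Finset.range i, (θ j - θ (d - j)) / (θ 0 - θ d)) +
        (θs i - θs 0) * (θ (d - i + 1) - θ 0)) ∧
    (∃ β : K, ∀ i : ℕ, 2 ≤ i → i ≤ d - 1 →
      (θ (i - 2) - θ (i + 1)) / (θ (i - 1) - θ i) = β ∧
      (θs (i - 2) - θs (i + 1)) / (θs (i - 1) - θs i) = β) := by
  have hsum {i : ℕ} (h1 : 1 ≤ i) (hi : i ≤ d) :
      ∑ j ∈ Finset.range i, (θ j - θ (d - j)) / (θ 0 - θ d) = i * ((d : K) - i + 1) / d :=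
    sum_sub_reflect_div_of_eq_racahEigenvalue hθ (hPA1 0 d (h1.trans hi) le_rfl).1 hi
  have hd {i : ℕ} (h1 : 1 ≤ i) (hi : i ≤ d) : (d : K) ≠ 0 := by
    have h := (hPA1 0 d (h1.trans hi) le_rfl).1
    rw [hθ 0 d.zero_le, hθ d le_rfl, Nat.cast_zero] at h
    exact ne_zero_of_racahEigenvalue_ne h
  refine ⟨fun i h1 hi => ?_, fun i h1 hi => ?_, 3, fun i h2 hi => ?_⟩
  · rw [hsum h1 hi, hφ i h1 hi, hϕ 1 le_rfl (h1.trans hi), hθs i hi, hθs 0 d.zero_le,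
      hθ (i - 1) (by lia), hθ d le_rfl, Nat.cast_sub h1]
    simpa using racahFirstSplit_eq (hd h1 hi) u us v i
  · rw [hsum h1 hi, hϕ i h1 hi, hφ 1 le_rfl (h1.trans hi), hθs i hi, hθs 0 d.zero_le,
      hθ (d - i + 1) (by lia), hθ 0 d.zero_le, Nat.cast_add, Nat.cast_sub hi]
    simpa using racahSecondSplit_eq (hd h1 hi) u us v i
  · obtain ⟨hne, hnes⟩ := hPA1 (i - 1) i (by lia) (by lia)
    exact ⟨sub_div_sub_eq_three_of_eq_racahEigenvalue hθ h2 hi hne,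
      sub_div_sub_eq_three_of_eq_racahEigenvalue hθs h2 hi hnes⟩

/-- The Racah data forms a parameter array: PA3, PA4 and PA5 hold. -/
theorem racah_parameter_array
    {K : Type*} [Field K] [IsAlgClosed K] (hchar : ringChar K ≠ 2)
    (d : ℕ) (u us v : K)
    (θ θs φ ϕ : ℕ → K)
    (hθ : ∀ i : ℕ, i ≤ d → θ i = ((i : K) + u) * ((i : K) + u + 1))
    (hθs : ∀ i : ℕ, i ≤ d → θs i = ((i : K) + us) * ((i : K) + us + 1))
    (hφ : ∀ i : ℕ, 1 ≤ i → i ≤ d →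
      φ i = (i : K) * ((i : K) - (d : K) - 1) * ((i : K) + u + us - v) *
        ((i : K) + u + us + (d : K) + 1 + v))
    (hϕ : ∀ i : ℕ, 1 ≤ i → i ≤ d →
      ϕ i = (i : K) * ((i : K) - (d : K) - 1) * ((i : K) - u + us + v) *
        ((i : K) - u + us - (d : K) - 1 - v))
    (hPA1 : ∀ i j : ℕ, i < j → j ≤ d → θ i ≠ θ j ∧ θs i ≠ θs j)
    (hPA2 : ∀ i : ℕ, 1 ≤ i → i ≤ d → φ i ≠ 0 ∧ ϕ i ≠ 0) :
    (∀ i : ℕ, 1 ≤ i → i ≤ d →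
      φ i = ϕ 1 * (∑ j ∈ Finset.range i, (θ j - θ (d - j)) / (θ 0 - θ d)) +
        (θs i - θs 0) * (θ (i - 1) - θ d)) ∧
    (∀ i : ℕ, 1 ≤ i → i ≤ d →
      ϕ i = φ 1 * (∑ j ∈ Finset.range i, (θ j - θ (d - j)) / (θ 0 - θ d)) +
        (θs i - θs 0) * (θ (d - i + 1) - θ 0)) ∧
    (∃ β : K, ∀ i : ℕ, 2 ≤ i → i ≤ d - 1 →
      (θ (i - 2) - θ (i + 1)) / (θ (i - 1) - θ i) = β ∧
      (θs (i - 2) - θs (i + 1)) / (θs (i - 1) - θs i) = β) :=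
  racah_parameter_array_general d u us v θ θs φ ϕ hθ hθs hφ hϕ hPA1
end

section
/- (Bannai–Ito parameter array.) Let d be a non-negative integer and let u, u*, v be scalars in K; for an integer n, n also denotes the element n·1 of K, and d/2 denotes d·(2·1)^{−1} in K. Define, for 0 ≤ i ≤ d, θ_i = (−1)^i·(i + u − d/2) and θ*_i = (−1)^i·(i + u* − d/2). For 1 ≤ i ≤ d define φ_i as follows: if d is even and i is even, φ_i = −i·(i + u + u* + v − (d+1)/2); if d is even and i is odd, φ_i = −(i − d − 1)·(i + u + u* − v − (d+1)/2); if d is odd and i is even, φ_i = −i·(i − d − 1); if d is odd and i is odd, φ_i = v² − (i + u + u* − (d+1)/2)². Likewise define ϕ_i: if d is even and i is even, ϕ_i = i·(i − u + u* − v − (d+1)/2); if d is even and i is odd, ϕ_i = (i − d − 1)·(i − u + u* + v − (d+1)/2); if d is odd and i is even, ϕ_i = −i·(i − d − 1); if d is odd and i is odd, ϕ_i = v² − (i − u + u* − (d+1)/2)². Assume θ_i ≠ θ_j and θ*_i ≠ θ*_j for 0 ≤ i < j ≤ d, and φ_i ≠ 0 and ϕ_i ≠ 0 for 1 ≤ i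 ≤ d. Then (θ_0,…,θ_d; θ*_0,…,θ*_d; φ_1,…,φ_d; ϕ_1,…,ϕ_d) is a parameter array over K of diameter d, i.e., conditions PA3, PA4 and PA5 also hold. -/
/-!
Put `s = (-1) ^ (d + 1)`. Reversing the order of the eigenvalues amounts to changing the signs of
`u` and `v`, up to the common factor `s`: `θ_{d-i}(u) = s θ_i(-u)` and
`ϕ_i(u, u*, v) = s φ_i(-u, u*, -v)`. Since PA4 is PA3 for the reversed array, and PA3 is homogeneous
in `(θ, φ, ϕ)`, only PA3 has to be computed. There `θ_j - θ_{d-j}` is `(-1) ^ j (2j - d)` for even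
`d` and `(-1) ^ j 2u` for odd `d`, so the sums are explicit. The common ratio in PA5 is `-1`.
-/

theorem sum_range_neg_one_pow_mul_two_mul_sub {R : Type*} [CommRing R] (a : R) (n : ℕ) :
    ∑ j ∈ Finset.range n, (-1 : R) ^ j * (2 * j - a) = if Even n then -(n : R) else n - a - 1 := by
  induction n with
  | zero => simp
  | succ n ih =>
    rw [Finset.sum_range_succ, ih]
    rcases Nat.even_or_odd n with hn | hn
    · simp only [hn, hn.neg_one_pow, Nat.even_add_one, not_true, if_true, if_false]
      push_cast
      ring
    · simp only [Nat.not_even_iff_odd.mpr hn, hn.neg_one_pow, Nat.even_add_one, not_false_iff,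
        if_true, if_false]
      push_cast
      ring

theorem eq_ite_even_of_parity_cases {α : Type*} {m n : ℕ} {x a b c e : α}
    (h : (Even m → Even n → x = a) ∧ (Even m → Odd n → x = b) ∧
      (Odd m → Even n → x = c) ∧ (Odd m → Odd n → x = e)) :
    x = if Even m then if Even n then a else b else if Even n then c else e := by
  grind

section SplitConditions

variable {K : Type*} [Field K] {d : ℕ} {θ θs φ ϕ θ' θs' φ' ϕ' : ℕ → K}

/-- Condition PA3 of a parameter array of diameter `d`. Only `θ i`, `θs i` with `i ≤ d` and `φ i`,
`ϕ i` with `1 ≤ i ≤ d` matter. -/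
def FirstSplitCondition (d : ℕ) (θ θs φ ϕ : ℕ → K) : Prop :=
  ∀ i : ℕ, 1 ≤ i → i ≤ d →
    φ i = ϕ 1 * (∑ j ∈ Finset.range i, (θ j - θ (d - j)) / (θ 0 - θ d)) +
      (θs i - θs 0) * (θ (i - 1) - θ d)

/-- Condition PA4 of a parameter array of diameter `d`, with the same conventions as
`FirstSplitCondition`. -/
def SecondSplitCondition (d : ℕ) (θ θs φ ϕ : ℕ → K) : Prop :=
  ∀ i : ℕ, 1 ≤ i → i ≤ d →
    ϕ i = φ 1 * (∑ j ∈ Finset.range i, (θ j - θ (d - j)) / (θ 0 - θ d)) +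
      (θs i - θs 0) * (θ (d - i + 1) - θ 0)

/-- Condition PA5 of a parameter array of diameter `d`. -/
def CommonRatioCondition (d : ℕ) (θ θs : ℕ → K) : Prop :=
  ∃ β : K, ∀ i : ℕ, 2 ≤ i → i ≤ d - 1 →
    (θ (i - 2) - θ (i + 1)) / (θ (i - 1) - θ i) = β ∧
    (θs (i - 2) - θs (i + 1)) / (θs (i - 1) - θs i) = β

theorem FirstSplitCondition.congr (h : FirstSplitCondition d θ θs φ ϕ)
    (hθ : ∀ i ≤ d, θ' i = θ i) (hθs : ∀ i ≤ d, θs' i = θs i)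
    (hφ : ∀ i, 1 ≤ i → i ≤ d → φ' i = φ i) (hϕ : ∀ i, 1 ≤ i → i ≤ d → ϕ' i = ϕ i) :
    FirstSplitCondition d θ' θs' φ' ϕ' := by
  intro i hi hid
  have hsum : ∑ j ∈ Finset.range i, (θ' j - θ' (d - j)) / (θ' 0 - θ' d) =
      ∑ j ∈ Finset.range i, (θ j - θ (d - j)) / (θ 0 - θ d) := by
    refine Finset.sum_congr rfl fun j hj => ?_
    rw [hθ j ((Finset.mem_range.mp hj).le.trans hid), hθ _ (Nat.sub_le d j), hθ 0 d.zero_le,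
      hθ d le_rfl]
  rw [hsum, hφ i hi hid, hϕ 1 le_rfl (hi.trans hid), hθs i hid, hθs 0 d.zero_le,
    hθ _ ((Nat.sub_le i 1).trans hid), hθ d le_rfl]
  exact h i hi hid

theorem FirstSplitCondition.const_mul (h : FirstSplitCondition d θ θs φ ϕ) {c : K} (hc : c ≠ 0) :
    FirstSplitCondition d (fun i => c * θ i) θs (fun i => c * φ i) (fun i => c * ϕ i) := by
  intro i hi hid
  simp only [← mul_sub, mul_div_mul_left _ _ hc]
  rw [h i hi hid]
  ring

theorem secondSplitCondition_of_reverse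
    (h : FirstSplitCondition d (fun i => θ (d - i)) θs ϕ φ) :
    SecondSplitCondition d θ θs φ ϕ := by
  intro i hi hid
  have hsum : ∑ j ∈ Finset.range i, (θ j - θ (d - j)) / (θ 0 - θ d) =
      ∑ j ∈ Finset.range i, (θ (d - j) - θ (d - (d - j))) / (θ (d - 0) - θ (d - d)) := by
    refine Finset.sum_congr rfl fun j hj => ?_
    rw [Nat.sub_sub_self ((Finset.mem_range.mp hj).le.trans hid), Nat.sub_zero, Nat.sub_self,
      ← neg_sub (θ (d - j)), ← neg_sub (θ d), neg_div_neg_eq]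
  have hindex : d - i + 1 = d - (i - 1) := by lia
  rw [hsum, hindex]
  simpa only [Nat.sub_self] using h i hi hid

end SplitConditions

section BannaiIto

variable {K : Type*} [Field K]

/-- The eigenvalue `θ_i` of the Bannai–Ito array of diameter `d`; replacing `u` by `u*` gives the
dual eigenvalue `θ*_i`. -/
def bannaiItoEigenvalue (d : ℕ) (u : K) (i : ℕ) : K :=
  (-1) ^ i * (i + u - d / 2)

/-- The entry `φ_i` of the first split sequence of the Bannai–Ito array. -/
def bannaiItoFirstSplit (d : ℕ) (u us v : K) (i : ℕ) : K :=
  if Even d then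
    if Even i then -(i : K) * (i + u + us + v - (d + 1) / 2)
    else -((i : K) - d - 1) * (i + u + us - v - (d + 1) / 2)
  else
    if Even i then -(i : K) * (i - d - 1)
    else v ^ 2 - (i + u + us - (d + 1) / 2) ^ 2

/-- The entry `ϕ_i` of the second split sequence of the Bannai–Ito array. -/
def bannaiItoSecondSplit (d : ℕ) (u us v : K) (i : ℕ) : K :=
  if Even d then
    if Even i then (i : K) * (i - u + us - v - (d + 1) / 2)
    else ((i : K) - d - 1) * (i - u + us + v - (d + 1) / 2)
  else
    if Even i then -(i : K) * (i - d - 1)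
    else v ^ 2 - (i - u + us - (d + 1) / 2) ^ 2

/-- The sequences `θ, θ*, φ, ϕ` are the Bannai–Ito data of diameter `d` with parameters `u, u*, v`.
They are functions on `ℕ`, constrained only at the indices that belong to the array. -/
structure IsBannaiItoArray (d : ℕ) (u us v : K) (θ θs φ ϕ : ℕ → K) : Prop where
  eigenvalue : ∀ i ≤ d, θ i = bannaiItoEigenvalue d u i
  dualEigenvalue : ∀ i ≤ d, θs i = bannaiItoEigenvalue d us i
  firstSplit : ∀ i, 1 ≤ i → i ≤ d → φ i = bannaiItoFirstSplit d u us v i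
  secondSplit : ∀ i, 1 ≤ i → i ≤ d → ϕ i = bannaiItoSecondSplit d u us v i

theorem bannaiItoSecondSplit_eq_mul_firstSplit_neg (d : ℕ) (u us v : K) (i : ℕ) :
    bannaiItoSecondSplit d u us v i =
      (-1) ^ (d + 1) * bannaiItoFirstSplit d (-u) us (-v) i := by
  unfold bannaiItoSecondSplit bannaiItoFirstSplit
  rcases Nat.even_or_odd d with hd | hd
  · rw [if_pos hd, if_pos hd, hd.add_one.neg_one_pow]
    split_ifs <;> ring
  · rw [if_neg (Nat.not_even_iff_odd.mpr hd), if_neg (Nat.not_even_iff_odd.mpr hd),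
      hd.add_one.neg_one_pow]
    split_ifs <;> ring

theorem bannaiItoEigenvalue_sub_add_three (d : ℕ) (u : K) (n : ℕ) :
    bannaiItoEigenvalue d u n - bannaiItoEigenvalue d u (n + 3) =
      -(bannaiItoEigenvalue d u (n + 1) - bannaiItoEigenvalue d u (n + 2)) := by
  unfold bannaiItoEigenvalue
  push_cast
  ring

theorem bannaiItoEigenvalue_ratio {d : ℕ} {u : K} {θ : ℕ → K}
    (hθ : ∀ i ≤ d, θ i = bannaiItoEigenvalue d u i) (hne : ∀ i < d, θ i ≠ θ (i + 1))
    {i : ℕ} (hi : 2 ≤ i) (hid : i ≤ d - 1) :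
    (θ (i - 2) - θ (i + 1)) / (θ (i - 1) - θ i) = -1 := by
  obtain ⟨n, rfl⟩ := Nat.exists_eq_add_of_le' hi
  change (θ n - θ (n + 3)) / (θ (n + 1) - θ (n + 2)) = -1
  rw [div_eq_iff (sub_ne_zero.mpr (hne (n + 1) (by lia))), neg_one_mul, hθ n (by lia),
    hθ (n + 1) (by lia), hθ (n + 2) (by lia), hθ (n + 3) (by lia)]
  exact bannaiItoEigenvalue_sub_add_three d u n

theorem IsBannaiItoArray.commonRatioCondition {d : ℕ} {u us v : K} {θ θs φ ϕ : ℕ → K}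
    (h : IsBannaiItoArray d u us v θ θs φ ϕ)
    (hθ : ∀ i < d, θ i ≠ θ (i + 1)) (hθs : ∀ i < d, θs i ≠ θs (i + 1)) :
    CommonRatioCondition d θ θs :=
  ⟨-1, fun _ hi hid => ⟨bannaiItoEigenvalue_ratio h.eigenvalue hθ hi hid,
    bannaiItoEigenvalue_ratio h.dualEigenvalue hθs hi hid⟩⟩

variable [NeZero (2 : K)]

theorem bannaiItoEigenvalue_reverse {d i : ℕ} (u : K) (hi : i ≤ d) :
    bannaiItoEigenvalue d u (d - i) = (-1) ^ (d + 1) * bannaiItoEigenvalue d (-u) i := by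
  obtain ⟨k, rfl⟩ := Nat.exists_eq_add_of_le hi
  have hsign : (-1 : K) ^ (i + k + 1) * (-1) ^ i = -(-1) ^ k := by
    rw [← pow_add, show i + k + 1 + i = 2 * i + (k + 1) by ring, pow_add, pow_mul, neg_one_sq,
      one_pow, one_mul, pow_succ, mul_neg_one]
  have htwo : (2 : K) ≠ 0 := two_ne_zero
  unfold bannaiItoEigenvalue
  rw [← mul_assoc, hsign, Nat.add_sub_cancel_left]
  push_cast
  field_simp
  ring

theorem bannaiItoEigenvalue_sub_reverse_of_even {d j : ℕ} (u : K) (hd : Even d) (hj : j ≤ d) :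
    bannaiItoEigenvalue d u j - bannaiItoEigenvalue d u (d - j) = (-1) ^ j * (2 * j - d) := by
  rw [bannaiItoEigenvalue_reverse u hj, hd.add_one.neg_one_pow]
  unfold bannaiItoEigenvalue
  field_simp
  ring

theorem bannaiItoEigenvalue_sub_reverse_of_odd {d j : ℕ} (u : K) (hd : Odd d) (hj : j ≤ d) :
    bannaiItoEigenvalue d u j - bannaiItoEigenvalue d u (d - j) = (-1) ^ j * (2 * u) := by
  rw [bannaiItoEigenvalue_reverse u hj, hd.add_one.neg_one_pow]
  unfold bannaiItoEigenvalue
  ring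

theorem sum_bannaiItoEigenvalue_sub_reverse_of_even {d i : ℕ} (u : K) (hd : Even d) (hi : i ≤ d) :
    ∑ j ∈ Finset.range i, (bannaiItoEigenvalue d u j - bannaiItoEigenvalue d u (d - j)) =
      if Even i then -(i : K) else i - d - 1 := by
  rw [← sum_range_neg_one_pow_mul_two_mul_sub]
  exact Finset.sum_congr rfl fun j hj =>
    bannaiItoEigenvalue_sub_reverse_of_even u hd ((Finset.mem_range.mp hj).le.trans hi)

theorem sum_bannaiItoEigenvalue_sub_reverse_of_odd {d i : ℕ} (u : K) (hd : Odd d) (hi : i ≤ d) :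
    ∑ j ∈ Finset.range i, (bannaiItoEigenvalue d u j - bannaiItoEigenvalue d u (d - j)) =
      if Even i then 0 else 2 * u := by
  rw [Finset.sum_congr rfl fun j hj =>
    bannaiItoEigenvalue_sub_reverse_of_odd u hd ((Finset.mem_range.mp hj).le.trans hi),
    ← Finset.sum_mul, neg_one_geom_sum, ite_mul, zero_mul, one_mul]

theorem firstSplitCondition_bannaiIto_of_even {d : ℕ} {u : K} (us v : K) (hd : Even d)
    (hne : 0 < d → bannaiItoEigenvalue d u 0 ≠ bannaiItoEigenvalue d u d) :
    FirstSplitCondition d (bannaiItoEigenvalue d u) (bannaiItoEigenvalue d us)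
      (bannaiItoFirstSplit d u us v) (bannaiItoSecondSplit d u us v) := by
  intro i hi hid
  have hends : bannaiItoEigenvalue d u 0 - bannaiItoEigenvalue d u d = -(d : K) := by
    simpa using bannaiItoEigenvalue_sub_reverse_of_even u hd d.zero_le
  have hd0 : (d : K) ≠ 0 := neg_ne_zero.mp (hends ▸ sub_ne_zero.mpr (hne (hi.trans hid)))
  have hϕ : bannaiItoSecondSplit d u us v 1 = (1 - u + us + v - (d + 1) / 2) * -(d : K) := by
    simp only [bannaiItoSecondSplit, if_pos hd, if_neg Nat.not_even_one, Nat.cast_one]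
    ring
  rw [← Finset.sum_div, sum_bannaiItoEigenvalue_sub_reverse_of_even u hd hid, hends, hϕ,
    mul_assoc, mul_div_cancel₀ _ (neg_ne_zero.mpr hd0)]
  obtain ⟨k, rfl⟩ := Nat.exists_eq_add_of_le' hi
  simp only [bannaiItoFirstSplit, bannaiItoEigenvalue, if_pos hd, hd.neg_one_pow,
    Nat.add_sub_cancel, pow_succ, pow_zero, Nat.cast_add, Nat.cast_one, Nat.cast_zero]
  rcases Nat.even_or_odd k with hk | hk
  · rw [if_neg (Nat.not_even_iff_odd.mpr hk.add_one), if_neg (Nat.not_even_iff_odd.mpr hk.add_one),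
      hk.neg_one_pow]
    field_simp
    ring
  · rw [if_pos hk.add_one, if_pos hk.add_one, hk.neg_one_pow]
    field_simp
    ring

theorem firstSplitCondition_bannaiIto_of_odd {d : ℕ} {u : K} (us v : K) (hd : Odd d)
    (hne : 0 < d → bannaiItoEigenvalue d u 0 ≠ bannaiItoEigenvalue d u d) :
    FirstSplitCondition d (bannaiItoEigenvalue d u) (bannaiItoEigenvalue d us)
      (bannaiItoFirstSplit d u us v) (bannaiItoSecondSplit d u us v) := by
  intro i hi hid
  have hd' : ¬Even d := Nat.not_even_iff_odd.mpr hd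
  have hends : bannaiItoEigenvalue d u 0 - bannaiItoEigenvalue d u d = 2 * u := by
    simpa using bannaiItoEigenvalue_sub_reverse_of_odd u hd d.zero_le
  have hu : 2 * u ≠ 0 := hends ▸ sub_ne_zero.mpr (hne (hi.trans hid))
  have hϕ : bannaiItoSecondSplit d u us v 1 = v ^ 2 - (1 - u + us - (d + 1) / 2) ^ 2 := by
    simp only [bannaiItoSecondSplit, if_neg hd', if_neg Nat.not_even_one, Nat.cast_one]
  rw [← Finset.sum_div, sum_bannaiItoEigenvalue_sub_reverse_of_odd u hd hid, hends, hϕ]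
  obtain ⟨k, rfl⟩ := Nat.exists_eq_add_of_le' hi
  simp only [bannaiItoFirstSplit, bannaiItoEigenvalue, if_neg hd', hd.neg_one_pow,
    Nat.add_sub_cancel, pow_succ, pow_zero, Nat.cast_add, Nat.cast_one, Nat.cast_zero]
  rcases Nat.even_or_odd k with hk | hk
  · rw [if_neg (Nat.not_even_iff_odd.mpr hk.add_one), if_neg (Nat.not_even_iff_odd.mpr hk.add_one),
      hk.neg_one_pow, div_self hu]
    field_simp
    ring
  · rw [if_pos hk.add_one, if_pos hk.add_one, hk.neg_one_pow, zero_div]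
    field_simp
    ring

theorem firstSplitCondition_bannaiIto {d : ℕ} {u : K} (us v : K)
    (hne : 0 < d → bannaiItoEigenvalue d u 0 ≠ bannaiItoEigenvalue d u d) :
    FirstSplitCondition d (bannaiItoEigenvalue d u) (bannaiItoEigenvalue d us)
      (bannaiItoFirstSplit d u us v) (bannaiItoSecondSplit d u us v) :=
  (Nat.even_or_odd d).elim (firstSplitCondition_bannaiIto_of_even us v · hne)
    (firstSplitCondition_bannaiIto_of_odd us v · hne)

theorem bannaiItoEigenvalue_neg_ends_ne {d : ℕ} {u : K}
    (hne : bannaiItoEigenvalue d u 0 ≠ bannaiItoEigenvalue d u d) :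
    bannaiItoEigenvalue d (-u) 0 ≠ bannaiItoEigenvalue d (-u) d := by
  have hfirst := bannaiItoEigenvalue_reverse u d.zero_le
  have hlast := bannaiItoEigenvalue_reverse u d.le_refl
  rw [Nat.sub_zero] at hfirst
  rw [Nat.sub_self] at hlast
  intro heq
  exact hne (by rw [hfirst, hlast, heq])

theorem IsBannaiItoArray.firstSplitCondition {d : ℕ} {u us v : K} {θ θs φ ϕ : ℕ → K}
    (h : IsBannaiItoArray d u us v θ θs φ ϕ) (hne : 0 < d → θ 0 ≠ θ d) :
    FirstSplitCondition d θ θs φ ϕ := by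
  rw [h.eigenvalue 0 d.zero_le, h.eigenvalue d le_rfl] at hne
  exact (firstSplitCondition_bannaiIto us v hne).congr h.eigenvalue h.dualEigenvalue h.firstSplit
    h.secondSplit

theorem IsBannaiItoArray.secondSplitCondition {d : ℕ} {u us v : K} {θ θs φ ϕ : ℕ → K}
    (h : IsBannaiItoArray d u us v θ θs φ ϕ) (hne : 0 < d → θ 0 ≠ θ d) :
    SecondSplitCondition d θ θs φ ϕ := by
  rw [h.eigenvalue 0 d.zero_le, h.eigenvalue d le_rfl] at hne
  have hsign : (-1 : K) ^ (d + 1) ≠ 0 := pow_ne_zero _ (neg_ne_zero.mpr one_ne_zero)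
  have hneg := (firstSplitCondition_bannaiIto us (-v)
    fun hd => bannaiItoEigenvalue_neg_ends_ne (hne hd)).const_mul hsign
  refine secondSplitCondition_of_reverse
    (hneg.congr (fun i hi => ?_) h.dualEigenvalue (fun i hi hid => ?_) fun i hi hid => ?_)
  · rw [h.eigenvalue _ (d.sub_le i), bannaiItoEigenvalue_reverse u hi]
  · rw [h.secondSplit i hi hid, bannaiItoSecondSplit_eq_mul_firstSplit_neg]
  · rw [h.firstSplit i hi hid, bannaiItoSecondSplit_eq_mul_firstSplit_neg, neg_neg, neg_neg,
      ← mul_assoc, ← mul_pow, neg_one_mul, neg_neg, one_pow, one_mul]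

end BannaiIto

theorem bannai_ito_parameter_array_general {K : Type*} [Field K] [NeZero (2 : K)]
    {d : ℕ} {u us v : K} {θ θs φ ϕ : ℕ → K} (h : IsBannaiItoArray d u us v θ θs φ ϕ)
    (hPA1 : ∀ i j : ℕ, i < j → j ≤ d → θ i ≠ θ j ∧ θs i ≠ θs j) :
    FirstSplitCondition d θ θs φ ϕ ∧ SecondSplitCondition d θ θs φ ϕ ∧
      CommonRatioCondition d θ θs := by
  have hends (hd : 0 < d) : θ 0 ≠ θ d := (hPA1 0 d hd le_rfl).1
  exact ⟨h.firstSplitCondition hends, h.secondSplitCondition hends, h.commonRatioCondition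
    (fun i hi => (hPA1 i (i + 1) i.lt_succ_self hi).1)
    (fun i hi => (hPA1 i (i + 1) i.lt_succ_self hi).2)⟩

/-- The Bannai–Ito data forms a parameter array: PA3, PA4 and PA5 hold. -/
theorem bannai_ito_parameter_array
    {K : Type*} [Field K] [IsAlgClosed K] (hchar : ringChar K ≠ 2)
    (d : ℕ) (u us v : K)
    (θ θs φ ϕ : ℕ → K)
    (hθ : ∀ i : ℕ, i ≤ d → θ i = (-1 : K) ^ i * ((i : K) + u - (d : K) / 2))
    (hθs : ∀ i : ℕ, i ≤ d → θs i = (-1 : K) ^ i * ((i : K) + us - (d : K) / 2))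
    (hφ : ∀ i : ℕ, 1 ≤ i → i ≤ d →
      (Even d → Even i →
        φ i = -(i : K) * ((i : K) + u + us + v - ((d : K) + 1) / 2)) ∧
      (Even d → Odd i →
        φ i = -((i : K) - (d : K) - 1) * ((i : K) + u + us - v - ((d : K) + 1) / 2)) ∧
      (Odd d → Even i →
        φ i = -(i : K) * ((i : K) - (d : K) - 1)) ∧
      (Odd d → Odd i →
        φ i = v ^ 2 - ((i : K) + u + us - ((d : K) + 1) / 2) ^ 2))
    (hϕ : ∀ i : ℕ, 1 ≤ i → i ≤ d →
      (Even d → Even i →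
        ϕ i = (i : K) * ((i : K) - u + us - v - ((d : K) + 1) / 2)) ∧
      (Even d → Odd i →
        ϕ i = ((i : K) - (d : K) - 1) * ((i : K) - u + us + v - ((d : K) + 1) / 2)) ∧
      (Odd d → Even i →
        ϕ i = -(i : K) * ((i : K) - (d : K) - 1)) ∧
      (Odd d → Odd i →
        ϕ i = v ^ 2 - ((i : K) - u + us - ((d : K) + 1) / 2) ^ 2))
    (hPA1 : ∀ i j : ℕ, i < j → j ≤ d → θ i ≠ θ j ∧ θs i ≠ θs j)
    (hPA2 : ∀ i : ℕ, 1 ≤ i → i ≤ d → φ i ≠ 0 ∧ ϕ i ≠ 0) :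
    (∀ i : ℕ, 1 ≤ i → i ≤ d →
      φ i = ϕ 1 * (∑ j ∈ Finset.range i, (θ j - θ (d - j)) / (θ 0 - θ d)) +
        (θs i - θs 0) * (θ (i - 1) - θ d)) ∧
    (∀ i : ℕ, 1 ≤ i → i ≤ d →
      ϕ i = φ 1 * (∑ j ∈ Finset.range i, (θ j - θ (d - j)) / (θ 0 - θ d)) +
        (θs i - θs 0) * (θ (d - i + 1) - θ 0)) ∧
    (∃ β : K, ∀ i : ℕ, 2 ≤ i → i ≤ d - 1 →
      (θ (i - 2) - θ (i + 1)) / (θ (i - 1) - θ i) = β ∧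
      (θs (i - 2) - θs (i + 1)) / (θs (i - 1) - θs i) = β) := by
  have : NeZero (2 : K) := ⟨Ring.two_ne_zero hchar⟩
  exact bannai_ito_parameter_array_general
    ⟨hθ, hθs, fun i hi hid => eq_ite_even_of_parity_cases (hφ i hi hid),
      fun i hi hid => eq_ite_even_of_parity_cases (hϕ i hi hid)⟩ hPA1
end
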